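/- Let D be an unbounded c-John domain in ℝⁿ, n ≥ 2, with D ≠ ℝⁿ. Let δ ∈ (0,1) and 1 ≤ p, q < ∞ be given such that p < n/δ and 0 ≤ 1/p − 1/q ≤ δ/n, and fix a Whitney decomposition 𝒲(D) of D. Then the following are equivalent: (A) a fractional (δ,q,p)-Hardy inequality holds in D; (B) there exists a constant N > 0 such that (∑_{Q ∈ 𝒲(D)} cap_{δ,p}(K ∩ Q, D)^{q/p})^{p/q} ≤ N · cap_{δ,p}(K, D) for every compact set K in D. -/

import Mathlib

open MeasureTheory Metric Set
open scoped ENNReal NNReal BigOperators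

noncomputable section

/-- Euclidean `n`-space. -/
abbrev Eucl (n : ℕ) : Type := EuclideanSpace ℝ (Fin n)

/-- `D` is a `c`-John domain (bounded or unbounded): an open connected set such that each
pair of points can be joined by a rectifiable curve, parametrized by arc length
(formalized as a `1`-Lipschitz parametrization on `[0, ℓ]`), along which
`dist(γ t, ∂D) ≥ min{t, ℓ - t}/c`. -/
def IsJohnDomain (n : ℕ) (c : ℝ) (D : Set (Eucl n)) : Prop :=
  IsOpen D ∧ IsConnected D ∧
    ∀ x₁ ∈ D, ∀ x₂ ∈ D, ∃ ℓ : ℝ, 0 ≤ ℓ ∧ ∃ γ : ℝ → Eucl n,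
      γ 0 = x₁ ∧ γ ℓ = x₂ ∧ (∀ t ∈ Icc (0:ℝ) ℓ, γ t ∈ D) ∧
      LipschitzOnWith 1 γ (Icc 0 ℓ) ∧
      ∀ t ∈ Icc (0:ℝ) ℓ, min t (ℓ - t) / c ≤ infDist (γ t) (frontier D)

/-- The ball `B(x, τ·dist(x, ∂G))`; by convention, if `∂G = ∅` (i.e. `G = ℝⁿ`)
it is all of `ℝⁿ`. -/
def tauBall (n : ℕ) (τ : ℝ) (G : Set (Eucl n)) (x : Eucl n) : Set (Eucl n) :=
  {y : Eucl n | edist x y < ENNReal.ofReal τ * EMetric.infEdist x (frontier G)}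

/-- The fractional kernel `|u x - u y|^p / |x - y|^(n + δp)` as an extended real. -/
def fracKernel (n : ℕ) (δ p : ℝ) (u : Eucl n → ℝ) (x y : Eucl n) : ℝ≥0∞ :=
  ENNReal.ofReal (|u x - u y| ^ p / dist x y ^ ((n : ℝ) + δ * p))

/-- The `p`-th power of the seminorm `|u|_{W^{δ,p}_τ(G)}`. -/
def fracEnergyTau (n : ℕ) (δ τ p : ℝ) (G : Set (Eucl n)) (u : Eucl n → ℝ) : ℝ≥0∞ :=
  ∫⁻ x in G, ∫⁻ y in tauBall n τ G x, fracKernel n δ p u x y ∂volume ∂volume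

/-- The `p`-th power of the seminorm `|u|_{W^{δ,p}(G)}`. -/
def fracEnergy (n : ℕ) (δ p : ℝ) (G : Set (Eucl n)) (u : Eucl n → ℝ) : ℝ≥0∞ :=
  ∫⁻ x in G, ∫⁻ y in G, fracKernel n δ p u x y ∂volume ∂volume

/-- The fractional `(δ,p)`-capacity of a compact set `K ⊆ G`:
`inf |u|_{W^{δ,p}(G)}^p` over `u ∈ C₀(G)` with `u ≥ 1` on `K`. -/
def fracCap (n : ℕ) (δ p : ℝ) (K G : Set (Eucl n)) : ℝ≥0∞ :=
  ⨅ (u : Eucl n → ℝ) (_ : Continuous u) (_ : HasCompactSupport u) (_ : tsupport u ⊆ G)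
    (_ : ∀ x ∈ K, 1 ≤ u x), fracEnergy n δ p G u

/-- The fractional `(δ,q,p)`-Hardy inequality holds in `G` with constant `C`. -/
def HasFracHardy (n : ℕ) (δ p q C : ℝ) (G : Set (Eucl n)) : Prop :=
  ∀ u : Eucl n → ℝ, Continuous u → HasCompactSupport u → tsupport u ⊆ G →
    (∫⁻ x in G, ENNReal.ofReal
        (|u x| ^ q / infDist x (frontier G) ^ (q * (δ + n * (1/q - 1/p)))) ∂volume)
      ≤ ENNReal.ofReal C * fracEnergy n δ p G u ^ (q / p)

/-- The closed axis-parallel cube with center `z` and half side length `r`. -/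
def cube (n : ℕ) (z : Eucl n) (r : ℝ) : Set (Eucl n) :=
  {x : Eucl n | ∀ i, |x i - z i| ≤ r}

/-- The quantity `|Q|^(-1-δ/n) ∫_Q |u - u_Q|` for the cube `Q = cube n z r`. -/
def aTerm (n : ℕ) (δ : ℝ) (u : Eucl n → ℝ) (z : Eucl n) (r : ℝ) : ℝ :=
  ((volume (cube n z r)).toReal) ^ (-(1:ℝ) - δ / n) *
    ∫ x in cube n z r, |u x - ⨍ y in cube n z r, u y ∂volume| ∂volume

/-- The seminorm `|u|_{A^{δ,p}_κ(G)}`: the supremum, over families `𝒬` of pairwise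
disjoint cubes `Q` (given by center-halfside pairs) with `κQ ⊆ G`, of the `L^p(G)`
norm of `∑_{Q ∈ 𝒬} (|Q|^(-1-δ/n) ∫_Q |u - u_Q|) χ_Q`. -/
def ASeminorm (n : ℕ) (κ δ p : ℝ) (G : Set (Eucl n)) (u : Eucl n → ℝ) : ℝ≥0∞ :=
  ⨆ (𝒬 : Set (Eucl n × ℝ)) (_ : ∀ c ∈ 𝒬, 0 < c.2 ∧ cube n c.1 (κ * c.2) ⊆ G)
    (_ : ∀ c ∈ 𝒬, ∀ c' ∈ 𝒬, c ≠ c' → cube n c.1 c.2 ∩ cube n c'.1 c'.2 = ∅),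
    (∫⁻ x in G,
        (∑' c : 𝒬, (cube n (c : Eucl n × ℝ).1 (c : Eucl n × ℝ).2).indicator
          (fun _ => ENNReal.ofReal (aTerm n δ u (c : Eucl n × ℝ).1 (c : Eucl n × ℝ).2)) x) ^ p
      ∂volume) ^ (1 / p)

/-- `Q` is a closed dyadic cube in `ℝⁿ`. -/
def IsDyadicCube (n : ℕ) (Q : Set (Eucl n)) : Prop :=
  ∃ (k : ℤ) (z : Fin n → ℤ),
    Q = {x : Eucl n | ∀ i, (z i : ℝ) * (2:ℝ) ^ k ≤ x i ∧ x i ≤ ((z i : ℝ) + 1) * (2:ℝ) ^ k}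

/-- `W` is a Whitney decomposition of the proper open set `G`: a countable family of
closed dyadic cubes with pairwise disjoint interiors whose union is `G`, with
`diam Q ≤ dist(Q, ∂G) ≤ 4 diam Q` for each cube `Q ∈ W`. -/
def IsWhitneyDecomposition (n : ℕ) (G : Set (Eucl n)) (W : Set (Set (Eucl n))) : Prop :=
  W.Countable ∧ (∀ Q ∈ W, IsDyadicCube n Q) ∧ ⋃₀ W = G ∧
    (W.Pairwise fun Q R => interior Q ∩ interior R = ∅) ∧
    ∀ Q ∈ W, (∀ x ∈ Q, Metric.diam Q ≤ infDist x (frontier G)) ∧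
      ∃ x ∈ Q, infDist x (frontier G) ≤ 4 * Metric.diam Q

/-- `lam` is an upper Assouad-type covering exponent for `E`: there is `C > 0` such
that for every `x ∈ E` and all `0 < r < R < 2 diam E`, the set `E ∩ B(x,R)` can be
covered by at most `C (R/r)^lam` balls centered in `E` of radius `r`. -/
def UpperAssouadBound (n : ℕ) (E : Set (Eucl n)) (lam : ℝ) : Prop :=
  ∃ C : ℝ, 0 < C ∧ ∀ x ∈ E, ∀ r R : ℝ, 0 < r → r < R →
    ENNReal.ofReal R < 2 * EMetric.diam E →
    ∃ F : Finset (Eucl n), ↑F ⊆ E ∧ (F.card : ℝ) ≤ C * (R / r) ^ lam ∧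
      E ∩ ball x R ⊆ ⋃ y ∈ F, ball y r

/-- The upper Assouad dimension of `E`. -/
def upperAssouadDim (n : ℕ) (E : Set (Eucl n)) : ℝ :=
  sInf {lam : ℝ | 0 ≤ lam ∧ UpperAssouadBound n E lam}

/-- `lam` is a lower Assouad-type exponent for `E`: there is `C > 0` such that for
every `x ∈ E` and all `0 < r < R < 2 diam E`, at least `C (R/r)^lam` balls centered
in `E` of radius `r` are needed to cover `E ∩ B(x,R)`. -/
def LowerAssouadBound (n : ℕ) (E : Set (Eucl n)) (lam : ℝ) : Prop :=
  ∃ C : ℝ, 0 < C ∧ ∀ x ∈ E, ∀ r R : ℝ, 0 < r → r < R →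
    ENNReal.ofReal R < 2 * EMetric.diam E →
    ∀ F : Finset (Eucl n), ↑F ⊆ E → (E ∩ ball x R ⊆ ⋃ y ∈ F, ball y r) →
      C * (R / r) ^ lam ≤ (F.card : ℝ)

/-- The lower Assouad dimension of `E`. -/
def lowerAssouadDim (n : ℕ) (E : Set (Eucl n)) : ℝ :=
  sSup {lam : ℝ | 0 ≤ lam ∧ LowerAssouadBound n E lam}

end

/-!
An unbounded John domain satisfies the measure density condition `|B(x, r) ∩ D| ≥ c₀ rⁿ` at all
scales, and this gives the isocapacitary inequality `|K| ^ (1 - δp/n) ≲ cap(K, D)`: for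
`u ∈ C₀(D)`, each point of a superlevel set sees a fixed proportion of low values of `u` at the
scale of the volume of the set.

(B) ⇒ (A): on a Whitney cube the Hardy weight is comparable to a power of the diameter, so the
isocapacitary inequality bounds the weighted measure of `K ∩ Q` by `cap(K ∩ Q, D) ^ (q/p)`, and (B)
sums these bounds to `cap(K, D) ^ (q/p)`. By Maz'ya's truncation argument this inequality between
measure and capacity is equivalent to the Hardy inequality.

(A) ⇒ (B): if `u` is admissible for `K` and `φ` is the cutoff function of `Q`, then `u φ` is
admissible for `K ∩ Q`. Its energy is at most the part of the energy of `u` located in the dilated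
cube `Q*`, plus `diam Q ^ (-δp) ∫_{Q*} |u| ^ p`. By Hölder's inequality the `q/p`-th power of the
latter is controlled by the Hardy integral over `Q*`, and the cubes `Q*` have bounded overlap.
-/

section NormedSpace

variable {E : Type*} [SeminormedAddCommGroup E] [NormedSpace ℝ E]

theorem ball_subset_of_le_infDist_frontier {D : Set E} {x : E} (hx : x ∈ D) {r : ℝ}
    (hr : r ≤ infDist x (frontier D)) : ball x r ⊆ D := by
  rcases le_or_gt r 0 with hr₀ | hr₀
  · simp [ball_eq_empty.2 hr₀]
  have hdisj : Disjoint (ball x r) (frontier D) :=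
    disjoint_ball_infDist.mono_left (ball_subset_ball hr)
  have hcover : ball x r ⊆ interior D ∪ (closure D)ᶜ := fun y hy ↦ by
    by_cases hyD : y ∈ closure D
    · exact .inl (by_contra fun hyi ↦ hdisj.le_bot ⟨hy, hyD, hyi⟩)
    · exact .inr hyD
  have hxi : x ∈ interior D :=
    (hcover (mem_ball_self hr₀)).resolve_right fun h ↦ h (subset_closure hx)
  refine ((convex_ball x r).isPreconnected.subset_left_of_subset_union isOpen_interior
    isClosed_closure.isOpen_compl ?_ hcover ⟨x, mem_ball_self hr₀, hxi⟩).trans interior_subset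
  exact disjoint_compl_right_iff_subset.2 (interior_subset.trans subset_closure)

end NormedSpace

section ENNReal

theorem exists_pos_le_ofReal {c : ℝ≥0∞} (hc : c ≠ ⊤) : ∃ C : ℝ, 0 < C ∧ c ≤ ENNReal.ofReal C :=
  ⟨c.toReal + 1, by positivity,
    (ENNReal.ofReal_toReal hc).symm.le.trans (ENNReal.ofReal_le_ofReal (by linarith))⟩

theorem exists_forall_le_two_mul {ι : Type*} [Nonempty ι] {f : ι → ℝ≥0∞} (hf : ⨆ i, f i ≠ ⊤) :
    ∃ i, ∀ j, f j ≤ 2 * f i := by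
  rcases eq_or_ne (⨆ i, f i) 0 with h | h
  · have hf₀ : ∀ i, f i = 0 := by simpa using h
    exact ‹Nonempty ι›.elim fun i ↦ ⟨i, by simp [hf₀]⟩
  · obtain ⟨i, hi⟩ := lt_iSup_iff.1 (ENNReal.half_lt_self h hf)
    refine ⟨i, fun j ↦ (le_iSup f j).trans ?_⟩
    rw [mul_comm]
    exact (ENNReal.div_le_iff two_ne_zero ENNReal.ofNat_ne_top).1 hi.le

theorem tsum_rpow_le_rpow_tsum {ι : Type*} (f : ι → ℝ≥0∞) {r : ℝ} (hr : 1 ≤ r) :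
    ∑' i, f i ^ r ≤ (∑' i, f i) ^ r := by
  have hsplit (x : ℝ≥0∞) : x ^ r = x * x ^ (r - 1) := by
    conv_rhs => enter [1]; rw [← ENNReal.rpow_one x]
    rw [← ENNReal.rpow_add_of_nonneg _ _ zero_le_one (by linarith), add_sub_cancel]
  calc ∑' i, f i ^ r = ∑' i, f i * f i ^ (r - 1) := by simp_rw [hsplit]
    _ ≤ ∑' i, f i * (∑' j, f j) ^ (r - 1) := by
        refine ENNReal.tsum_le_tsum fun i ↦ mul_le_mul' le_rfl ?_
        exact ENNReal.rpow_le_rpow (ENNReal.le_tsum i) (by linarith)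
    _ = (∑' i, f i) ^ r := by rw [ENNReal.tsum_mul_right, ← hsplit]

end ENNReal

section Measure

variable {α : Type*} [MeasurableSpace α] {μ : Measure α}

theorem rpow_lintegral_enorm_rpow_le {E : Type*} [NormedAddCommGroup E] {p q : ℝ} (hp : 0 < p)
    (hpq : p ≤ q) {f : α → E} (hf : AEStronglyMeasurable f μ) :
    (∫⁻ x, ‖f x‖ₑ ^ p ∂μ) ^ (q / p) ≤ (∫⁻ x, ‖f x‖ₑ ^ q ∂μ) * μ univ ^ (q / p - 1) := by
  have hq : 0 < q := hp.trans_le hpq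
  have hHolder := ENNReal.rpow_le_rpow (eLpNorm'_le_eLpNorm'_mul_rpow_measure_univ hp hpq hf) hq.le
  rw [ENNReal.mul_rpow_of_nonneg _ _ hq.le, eLpNorm', eLpNorm', ← ENNReal.rpow_mul,
    ← ENNReal.rpow_mul, ← ENNReal.rpow_mul, one_div_mul_cancel hq.ne', ENNReal.rpow_one] at hHolder
  rwa [one_div_mul_eq_div, show (1 / p - 1 / q) * q = q / p - 1 by field_simp] at hHolder

theorem lintegral_lintegral_le_two_mul_of_symm [SFinite μ] {k : α → α → ℝ≥0∞}
    (hk : Measurable (Function.uncurry k)) (hsymm : ∀ x y, k x y = k y x) {S : Set α}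
    (hS : MeasurableSet S) (hzero : ∀ x ∉ S, ∀ y ∉ S, k x y = 0) :
    ∫⁻ x, ∫⁻ y, k x y ∂μ ∂μ ≤ 2 * ∫⁻ x in S, ∫⁻ y, k x y ∂μ ∂μ := by
  have hinner : ∀ x ∈ Sᶜ, ∫⁻ y, k x y ∂μ = ∫⁻ y in S, k x y ∂μ := fun x hx ↦
    (setLIntegral_eq_of_support_subset fun y hy ↦ by_contra fun hyS ↦ hy (hzero x hx y hyS)).symm
  have hcompl : ∫⁻ x in Sᶜ, ∫⁻ y, k x y ∂μ ∂μ ≤ ∫⁻ x in S, ∫⁻ y, k x y ∂μ ∂μ :=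
    calc ∫⁻ x in Sᶜ, ∫⁻ y, k x y ∂μ ∂μ = ∫⁻ x in Sᶜ, ∫⁻ y in S, k x y ∂μ ∂μ :=
          setLIntegral_congr_fun hS.compl hinner
      _ ≤ ∫⁻ x, ∫⁻ y in S, k x y ∂μ ∂μ := setLIntegral_le_lintegral _ _
      _ = ∫⁻ y in S, ∫⁻ x, k x y ∂μ ∂μ := lintegral_lintegral_swap hk.aemeasurable
      _ = ∫⁻ x in S, ∫⁻ y, k x y ∂μ ∂μ := by simp_rw [hsymm]
  rw [← lintegral_add_compl _ hS, two_mul]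
  gcongr

theorem tsum_indicator_mul_le_measure {ι : Type*} {T : ι → Set α} (hT : ∀ i, MeasurableSet (T i))
    (hdisj : Pairwise (Function.onFun Disjoint T)) {s : Set ι} {a : ℝ≥0∞}
    (ha : ∀ i ∈ s, a ≤ μ (T i)) {B : Set α} (hB : ∀ i ∈ s, T i ⊆ B) :
    (∑' i, s.indicator 1 i) * a ≤ μ B :=
  calc (∑' i, s.indicator 1 i) * a = ∑' _i : s, a := by
        rw [← tsum_subtype, ← ENNReal.tsum_mul_right]
        simp only [Pi.one_apply, one_mul]
    _ ≤ ∑' i : s, μ (T i) := ENNReal.tsum_le_tsum fun i ↦ ha i i.2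
    _ ≤ μ (⋃ i : s, T i) := tsum_meas_le_meas_iUnion_of_disjoint _ (fun i ↦ hT i)
        (hdisj.comp_of_injective Subtype.coe_injective)
    _ ≤ μ B := measure_mono (iUnion_subset fun i ↦ hB i i.2)

theorem tsum_setLIntegral_le_of_tsum_indicator_le {ι : Type*} [Countable ι] {S : ι → Set α}
    (hS : ∀ i, MeasurableSet (S i)) {M : ℝ≥0∞}
    (hM : ∀ᵐ x ∂μ, ∑' i, (S i).indicator (1 : α → ℝ≥0∞) x ≤ M) {f : α → ℝ≥0∞}
    (hf : AEMeasurable f μ) :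
    ∑' i, ∫⁻ x in S i, f x ∂μ ≤ M * ∫⁻ x, f x ∂μ := by
  have hind (i : ι) (x : α) : (S i).indicator f x = (S i).indicator 1 x * f x := by
    by_cases hx : x ∈ S i <;> simp [hx]
  calc ∑' i, ∫⁻ x in S i, f x ∂μ = ∫⁻ x, ∑' i, (S i).indicator f x ∂μ := by
        simp_rw [lintegral_tsum fun i ↦ hf.indicator (hS i), lintegral_indicator (hS _)]
    _ ≤ ∫⁻ x, M * f x ∂μ := lintegral_mono_ae <| hM.mono fun x hx ↦ by
        simp_rw [hind, ENNReal.tsum_mul_right]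
        gcongr
    _ = M * ∫⁻ x, f x ∂μ := lintegral_const_mul'' _ hf

end Measure

/-- The class `C₀(G)` of continuous functions with compact support in `G`. As in the definition of
the capacity, its members are total functions vanishing off `G`. -/
structure MemC0 {X : Type*} [TopologicalSpace X] (G : Set X) (u : X → ℝ) : Prop where
  continuous : Continuous u
  hasCompactSupport : HasCompactSupport u
  tsupport_subset : tsupport u ⊆ G

namespace MemC0

variable {X : Type*} [TopologicalSpace X] {G : Set X} {u : X → ℝ}

theorem of_support_subset {v : X → ℝ} (hu : MemC0 G u) (hv : Continuous v)
    (hvu : Function.support v ⊆ Function.support u) : MemC0 G v where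
  continuous := hv
  hasCompactSupport := hu.hasCompactSupport.mono hvu
  tsupport_subset := (closure_mono hvu).trans hu.tsupport_subset

theorem mul_continuous {φ : X → ℝ} (hu : MemC0 G u) (hφ : Continuous φ) :
    MemC0 G fun x ↦ u x * φ x :=
  hu.of_support_subset (hu.continuous.mul hφ) (Function.support_mul_subset_left u φ)

theorem superlevel_subset_tsupport (u : X → ℝ) {t : ℝ} (ht : 0 < t) :
    {x | t ≤ |u x|} ⊆ tsupport u := fun _ hx ↦
  subset_tsupport u (abs_pos.1 (ht.trans_le hx))

theorem isCompact_superlevel (hu : MemC0 G u) {t : ℝ} (ht : 0 < t) : IsCompact {x | t ≤ |u x|} :=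
  hu.hasCompactSupport.of_isClosed_subset (isClosed_le continuous_const hu.continuous.abs)
    (superlevel_subset_tsupport u ht)

theorem superlevel_subset (hu : MemC0 G u) {t : ℝ} (ht : 0 < t) : {x | t ≤ |u x|} ⊆ G :=
  (superlevel_subset_tsupport u ht).trans hu.tsupport_subset

end MemC0

section Energy

variable {n : ℕ} {δ p : ℝ} {G : Set (Eucl n)} {u : Eucl n → ℝ}

/-- The singular weight `|x - y|^(-(n + δp))` of the fractional energy. -/
noncomputable def fracWeight (n : ℕ) (δ p : ℝ) (x y : Eucl n) : ℝ≥0∞ :=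
  ENNReal.ofReal (dist x y ^ ((n : ℝ) + δ * p))⁻¹

theorem fracKernel_eq_mul_fracWeight (hp : 0 ≤ p) (u : Eucl n → ℝ) (x y : Eucl n) :
    fracKernel n δ p u x y = ‖u x - u y‖ₑ ^ p * fracWeight n δ p x y := by
  rw [fracKernel, fracWeight, div_eq_mul_inv, ENNReal.ofReal_mul (by positivity),
    ← ENNReal.ofReal_rpow_of_nonneg (abs_nonneg _) hp, Real.enorm_eq_ofReal_abs]

theorem fracKernel_comm (u : Eucl n → ℝ) (x y : Eucl n) :
    fracKernel n δ p u x y = fracKernel n δ p u y x := by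
  rw [fracKernel, fracKernel, abs_sub_comm, dist_comm]

theorem measurable_fracKernel (hu : Measurable u) :
    Measurable (Function.uncurry (fracKernel n δ p u)) :=
  ((((hu.comp measurable_fst).sub (hu.comp measurable_snd)).abs.pow_const p).div
    (measurable_dist.pow_const _)).ennreal_ofReal

theorem fracEnergy_const_mul (hp : 0 ≤ p) (c : ℝ) :
    fracEnergy n δ p G (fun x ↦ c * u x) = ‖c‖ₑ ^ p * fracEnergy n δ p G u := by
  have hc : ‖c‖ₑ ^ p ≠ ⊤ := ENNReal.rpow_ne_top_of_nonneg hp enorm_ne_top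
  have hkernel (x y : Eucl n) :
      fracKernel n δ p (fun z ↦ c * u z) x y = ‖c‖ₑ ^ p * fracKernel n δ p u x y := by
    rw [fracKernel_eq_mul_fracWeight hp, fracKernel_eq_mul_fracWeight hp, ← mul_sub, enorm_mul,
      ENNReal.mul_rpow_of_nonneg _ _ hp, mul_assoc]
  simp_rw [fracEnergy, hkernel, lintegral_const_mul' _ _ hc]

theorem le_fracCap_iff {K : Set (Eucl n)} {a : ℝ≥0∞} :
    a ≤ fracCap n δ p K G ↔
      ∀ u, MemC0 G u → (∀ x ∈ K, 1 ≤ u x) → a ≤ fracEnergy n δ p G u := by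
  simp only [fracCap, le_iInf_iff]
  exact ⟨fun h u hu ↦ h u hu.1 hu.2 hu.3, fun h u hu₁ hu₂ hu₃ ↦ h u ⟨hu₁, hu₂, hu₃⟩⟩

theorem fracCap_le_fracEnergy {K : Set (Eucl n)} (hu : MemC0 G u) (huK : ∀ x ∈ K, 1 ≤ u x) :
    fracCap n δ p K G ≤ fracEnergy n δ p G u :=
  le_fracCap_iff.1 le_rfl u hu huK

end Energy

section MeasureDensity

variable {n : ℕ}

theorem volume_ball_eq_ofReal (x : Eucl n) {r : ℝ} (hr : 0 < r) :
    volume (ball x r) = ENNReal.ofReal (volume.real (ball (0 : Eucl n) 1) * r ^ n) := by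
  rw [Measure.addHaar_ball_of_pos _ _ hr, mul_comm, ENNReal.ofReal_mul measureReal_nonneg,
    ofReal_measureReal measure_ball_lt_top.ne, finrank_euclideanSpace_fin]

theorem volume_real_unitBall_pos (n : ℕ) : 0 < volume.real (ball (0 : Eucl n) 1) :=
  ENNReal.toReal_pos (measure_ball_pos _ _ one_pos).ne' measure_ball_lt_top.ne

/-- The measure density condition `|B(x, r) ∩ D| ≥ c₀ rⁿ` at all points `x ∈ D` and all scales
`r > 0`. -/
def HasMeasureDensity (c₀ : ℝ) (D : Set (Eucl n)) : Prop :=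
  ∀ x ∈ D, ∀ r : ℝ, 0 < r → ENNReal.ofReal (c₀ * r ^ n) ≤ volume (ball x r ∩ D)

/-- Follow a John curve from `x` to a far away point for the length `r / 2`. -/
theorem IsJohnDomain.exists_ball_subset {c : ℝ} (hc : 1 ≤ c) {D : Set (Eucl n)}
    (hD : IsJohnDomain n c D) (hDu : ¬ Bornology.IsBounded D) {x : Eucl n} (hx : x ∈ D) {r : ℝ}
    (hr : 0 < r) : ∃ y, ball y (r / 2 / c) ⊆ ball x r ∩ D := by
  obtain ⟨-, -, hcurve⟩ := hD
  obtain ⟨y, hy, hxy⟩ : ∃ y ∈ D, 2 * r < dist y x := by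
    by_contra! hfar
    exact hDu (isBounded_closedBall.subset hfar)
  obtain ⟨ℓ, hℓ, γ, hγ₀, hγℓ, hγD, hLip, hJohn⟩ := hcurve x hx y hy
  have hdist : ∀ t ∈ Icc 0 ℓ, dist (γ t) x ≤ t := fun t ht ↦ by
    simpa [hγ₀, abs_of_nonneg ht.1] using hLip.dist_le_mul t ht 0 ⟨le_rfl, hℓ⟩
  have hrℓ : 2 * r < ℓ := hxy.trans_le (hγℓ ▸ hdist ℓ ⟨hℓ, le_rfl⟩)
  have ht : r / 2 ∈ Icc 0 ℓ := ⟨by linarith, by linarith⟩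
  have hinf : r / 2 / c ≤ infDist (γ (r / 2)) (frontier D) := by
    simpa only [min_eq_left (by linarith : r / 2 ≤ ℓ - r / 2)] using hJohn _ ht
  refine ⟨γ (r / 2), subset_inter (ball_subset_ball' ?_)
    (ball_subset_of_le_infDist_frontier (hγD _ ht) hinf)⟩
  linarith [hdist _ ht, div_le_self (by linarith : 0 ≤ r / 2) hc]

theorem IsJohnDomain.hasMeasureDensity {c : ℝ} (hc : 1 ≤ c) {D : Set (Eucl n)}
    (hD : IsJohnDomain n c D) (hDu : ¬ Bornology.IsBounded D) :
    HasMeasureDensity (volume.real (ball (0 : Eucl n) 1) * (1 / (2 * c)) ^ n) D := by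
  intro x hx r hr
  obtain ⟨y, hy⟩ := hD.exists_ball_subset hc hDu hx hr
  calc ENNReal.ofReal (volume.real (ball (0 : Eucl n) 1) * (1 / (2 * c)) ^ n * r ^ n)
      = volume (ball y (r / 2 / c)) := by
        rw [volume_ball_eq_ofReal _ (by positivity), mul_assoc, ← mul_pow]
        congr 3
        field_simp
    _ ≤ volume (ball x r ∩ D) := measure_mono hy

end MeasureDensity

section Isocapacitary

variable {n : ℕ} {c₀ δ p : ℝ} {D : Set (Eucl n)} {u : Eucl n → ℝ}

/-- A ball of radius `r` around `x` contains enough of `D` for half of it to lie outside `B`. -/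
theorem HasMeasureDensity.le_setLIntegral_fracKernel (hD : HasMeasureDensity c₀ D)
    (hDm : MeasurableSet D) (hc₀ : 0 ≤ c₀) (hδ : 0 ≤ δ) (hp : 0 ≤ p) {B : Set (Eucl n)}
    (hB : MeasurableSet B) {r : ℝ} (hr : 0 < r) (hBr : volume B ≤ ENNReal.ofReal (c₀ * r ^ n / 2))
    {h : ℝ} (hh : 0 < h) {x : Eucl n} (hx : x ∈ D) (hsep : ∀ y ∈ D, y ∉ B → h ≤ |u x - u y|) :
    ENNReal.ofReal (h ^ p / r ^ ((n : ℝ) + δ * p) * (c₀ * r ^ n / 2)) ≤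
      ∫⁻ y in D, fracKernel n δ p u x y := by
  have hvol : ENNReal.ofReal (c₀ * r ^ n / 2) ≤ volume ((ball x r ∩ D) \ B) :=
    calc ENNReal.ofReal (c₀ * r ^ n / 2)
        = ENNReal.ofReal (c₀ * r ^ n) - ENNReal.ofReal (c₀ * r ^ n / 2) := by
          rw [← ENNReal.ofReal_sub _ (by positivity), sub_half]
      _ ≤ volume (ball x r ∩ D) - volume B := tsub_le_tsub (hD x hx r hr) hBr
      _ ≤ volume ((ball x r ∩ D) \ B) := le_measure_sdiff
  have hkernel : ∀ y ∈ (ball x r ∩ D) \ B,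
      ENNReal.ofReal (h ^ p / r ^ ((n : ℝ) + δ * p)) ≤ fracKernel n δ p u x y := by
    rintro y ⟨⟨hyr, hyD⟩, hyB⟩
    have hu := hsep y hyD hyB
    have hxy : 0 < dist x y := dist_pos.2 fun hxy ↦ by simp [hxy] at hu; linarith
    have hyr' : dist x y ≤ r := (mem_ball'.1 hyr).le
    unfold fracKernel
    gcongr
  calc ENNReal.ofReal (h ^ p / r ^ ((n : ℝ) + δ * p) * (c₀ * r ^ n / 2))
      ≤ ENNReal.ofReal (h ^ p / r ^ ((n : ℝ) + δ * p)) * volume ((ball x r ∩ D) \ B) := by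
        rw [ENNReal.ofReal_mul (by positivity)]
        gcongr
    _ ≤ ∫⁻ y in (ball x r ∩ D) \ B, fracKernel n δ p u x y := by
        rw [← setLIntegral_const]
        exact setLIntegral_mono' ((measurableSet_ball.inter hDm).diff hB) hkernel
    _ ≤ ∫⁻ y in D, fracKernel n δ p u x y :=
        lintegral_mono_set (sdiff_subset.trans inter_subset_right)

theorem HasMeasureDensity.mul_volume_le_rpow_volume_mul_fracEnergy [NeZero n]
    (hD : HasMeasureDensity c₀ D) (hDm : MeasurableSet D) (hc₀ : 0 < c₀) (hδ : 0 ≤ δ) (hp : 0 ≤ p)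
    {A B : Set (Eucl n)} (hA : MeasurableSet A) (hB : MeasurableSet B) (hAD : A ⊆ D)
    (hB_top : volume B ≠ ⊤) {h : ℝ} (hh : 0 < h)
    (hsep : ∀ x ∈ A, ∀ y ∈ D, y ∉ B → h ≤ |u x - u y|) :
    ENNReal.ofReal (h ^ p * (c₀ / 2) ^ (1 + δ * p / n)) * volume A ≤
      volume B ^ (δ * p / n) * fracEnergy n δ p D u := by
  have hAB : A ⊆ B := fun x hx ↦ by
    by_contra hxB
    simpa [hh.not_ge] using hsep x hx x (hAD hx) hxB
  rcases eq_or_ne (volume B) 0 with hB₀ | hB₀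
  · simp [measure_mono_null hAB hB₀]
  have hn : (n : ℝ) ≠ 0 := NeZero.ne _
  set β := volume.real B
  have hβ : 0 < β := ENNReal.toReal_pos hB₀ hB_top
  have hβB : volume B = ENNReal.ofReal β := (ENNReal.ofReal_toReal hB_top).symm
  set r : ℝ := (β / (c₀ / 2)) ^ (1 / (n : ℝ))
  have hrn : c₀ * r ^ n / 2 = β := by
    rw [← Real.rpow_natCast, ← Real.rpow_mul (by positivity), one_div_mul_cancel hn, Real.rpow_one]
    field_simp
  have hconst : h ^ p * (c₀ / 2) ^ (1 + δ * p / n) =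
      β ^ (δ * p / n) * (h ^ p / r ^ ((n : ℝ) + δ * p) * (c₀ * r ^ n / 2)) := by
    have hexp : 1 / (n : ℝ) * (n + δ * p) = 1 + δ * p / n := by field_simp
    rw [hrn, ← Real.rpow_mul (by positivity), hexp, Real.div_rpow hβ.le (by positivity),
      Real.rpow_add hβ, Real.rpow_one]
    field_simp
  rw [hconst, ENNReal.ofReal_mul (by positivity), mul_assoc, hβB, ENNReal.ofReal_rpow_of_pos hβ,
    ← setLIntegral_const]
  gcongr
  refine (setLIntegral_mono' hA fun x hx ↦ ?_).trans (lintegral_mono_set hAD)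
  exact hD.le_setLIntegral_fracKernel hDm hc₀.le hδ hp hB (by positivity)
    (hβB.trans_le (by rw [hrn])) hh (hAD hx) (hsep x hx)

theorem le_mul_of_rpow_mul_rpow_half_le {p a s : ℝ} (hp : 0 ≤ p) (ha : 0 < a) (hs : 0 < s)
    {V W : ℝ≥0∞}
    (h : ENNReal.ofReal (s / 2) ^ p * V ^ a ≤ 2 * (ENNReal.ofReal s ^ p * W ^ a)) :
    V ≤ (2 * 2 ^ p) ^ (1 / a) * W := by
  have hs₀ : ENNReal.ofReal (s / 2) ^ p ≠ 0 := by simp [hs]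
  have hs_top : ENNReal.ofReal (s / 2) ^ p ≠ ⊤ := by finiteness
  have hs₂ : ENNReal.ofReal s ^ p = ENNReal.ofReal (s / 2) ^ p * 2 ^ p := by
    rw [← ENNReal.mul_rpow_of_nonneg _ _ hp, ← ENNReal.ofReal_ofNat 2,
      ← ENNReal.ofReal_mul (by positivity), div_mul_cancel₀ _ two_ne_zero]
  have hVW : V ^ a ≤ 2 * 2 ^ p * W ^ a := by
    rw [hs₂, mul_assoc, mul_left_comm 2, ENNReal.mul_le_mul_iff_right hs₀ hs_top] at h
    rwa [mul_assoc]
  rw [← ENNReal.rpow_le_rpow_iff ha, ENNReal.mul_rpow_of_nonneg _ _ ha.le, ← ENNReal.rpow_mul,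
    one_div_mul_cancel ha.ne', ENNReal.rpow_one]
  exact hVW

theorem MemC0.exists_forall_rpow_mul_rpow_volume_superlevel_le {G : Set (Eucl n)} (hu : MemC0 G u)
    (hp : 0 ≤ p) {a : ℝ} (ha : 0 < a) :
    ∃ s : ℝ, 0 < s ∧ ∀ t : ℝ, 0 < t →
      ENNReal.ofReal t ^ p * volume {x | t ≤ |u x|} ^ a ≤
        2 * (ENNReal.ofReal s ^ p * volume {x | s ≤ |u x|} ^ a) := by
  obtain ⟨M, hM⟩ := hu.hasCompactSupport.exists_bound_of_continuous hu.continuous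
  let g (t : Ioi (0 : ℝ)) : ℝ≥0∞ := ENNReal.ofReal t ^ p * volume {x | t ≤ |u x|} ^ a
  have hg (t : Ioi (0 : ℝ)) : g t ≤ ENNReal.ofReal M ^ p * volume (tsupport u) ^ a := by
    rcases {x | (t : ℝ) ≤ |u x|}.eq_empty_or_nonempty with ht | ⟨x, hx⟩
    · simp [g, ht, ha]
    · have htM : (t : ℝ) ≤ M := le_trans hx (hM x)
      dsimp only [g]
      gcongr
      exact MemC0.superlevel_subset_tsupport u t.2
  have hbound : ENNReal.ofReal M ^ p * volume (tsupport u) ^ a ≠ ⊤ :=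
    ENNReal.mul_ne_top (ENNReal.rpow_ne_top_of_nonneg hp ENNReal.ofReal_ne_top)
      (ENNReal.rpow_ne_top_of_nonneg ha.le hu.hasCompactSupport.isCompact.measure_ne_top)
  obtain ⟨s, hs⟩ := exists_forall_le_two_mul (ne_top_of_le_ne_top hbound (iSup_le hg))
  exact ⟨s, s.2, fun t ht ↦ hs ⟨t, ht⟩⟩

theorem HasMeasureDensity.rpow_mul_rpow_volume_superlevel_le_of_doubling [NeZero n]
    (hD : HasMeasureDensity c₀ D) (hDm : MeasurableSet D) (hc₀ : 0 < c₀) (hδ : 0 ≤ δ) (hp : 0 ≤ p)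
    (hpn : δ * p / n < 1) (hu : MemC0 D u) {s : ℝ} (hs : 0 < s) {A : ℝ≥0∞}
    (hA : volume {x | s / 2 ≤ |u x|} ≤ A * volume {x | s ≤ |u x|}) :
    ENNReal.ofReal s ^ p * volume {x | s ≤ |u x|} ^ (1 - δ * p / n) ≤
      (ENNReal.ofReal ((1 / 2) ^ p * (c₀ / 2) ^ (1 + δ * p / n)))⁻¹ * A ^ (δ * p / n) *
        fracEnergy n δ p D u := by
  set σ := δ * p / n
  have hσ : 0 ≤ σ := by positivity
  set c := ENNReal.ofReal ((1 / 2) ^ p * (c₀ / 2) ^ (1 + σ))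
  have hc : c ≠ 0 := (ENNReal.ofReal_pos.2 (by positivity)).ne'
  set V := volume {x | s ≤ |u x|}
  rcases eq_or_ne V 0 with hV | hV
  · simp [hV, ENNReal.zero_rpow_of_pos (sub_pos.2 hpn)]
  have hV_top : V ≠ ⊤ := (hu.isCompact_superlevel hs).measure_ne_top
  have hVσ : V ^ (1 - σ) * V ^ σ = V := by
    rw [← ENNReal.rpow_add _ _ hV hV_top, sub_add_cancel, ENNReal.rpow_one]
  have hmeas (r : ℝ) : MeasurableSet {x | r ≤ |u x|} :=
    (isClosed_le continuous_const hu.continuous.abs).measurableSet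
  have hlevels : ENNReal.ofReal ((s / 2) ^ p * (c₀ / 2) ^ (1 + σ)) * V ≤
      volume {x | s / 2 ≤ |u x|} ^ σ * fracEnergy n δ p D u := by
    refine hD.mul_volume_le_rpow_volume_mul_fracEnergy hDm hc₀ hδ hp (hmeas s) (hmeas (s / 2))
      (hu.superlevel_subset hs) (hu.isCompact_superlevel (half_pos hs)).measure_ne_top
      (half_pos hs) fun x (hx : s ≤ |u x|) y _ hy ↦ ?_
    have hy' : |u y| < s / 2 := not_le.1 hy
    linarith [abs_sub_abs_le_abs_sub (u x) (u y)]
  have hsc : ENNReal.ofReal ((s / 2) ^ p * (c₀ / 2) ^ (1 + σ)) = c * ENNReal.ofReal s ^ p := by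
    rw [ENNReal.ofReal_rpow_of_pos hs, ← ENNReal.ofReal_mul (by positivity), div_eq_mul_one_div,
      Real.mul_rpow hs.le (by positivity)]
    ring_nf
  have hV_pos : V ^ σ ≠ 0 := (ENNReal.rpow_pos hV.bot_lt hV_top).ne'
  rw [← ENNReal.mul_le_mul_iff_left hV_pos (by finiteness), mul_assoc, hVσ, mul_assoc, mul_assoc,
    ← ENNReal.mul_le_iff_le_inv hc ENNReal.ofReal_ne_top, ← mul_assoc, ← hsc]
  calc ENNReal.ofReal ((s / 2) ^ p * (c₀ / 2) ^ (1 + σ)) * V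
      ≤ (A * V) ^ σ * fracEnergy n δ p D u := hlevels.trans (by gcongr)
    _ = A ^ σ * (fracEnergy n δ p D u * V ^ σ) := by
        rw [ENNReal.mul_rpow_of_nonneg _ _ hσ, mul_assoc, mul_comm (V ^ σ)]

/-- The energy is estimated at a level `s` that almost maximizes `t ^ p * |{t ≤ |u|}| ^ (1 - δp/n)`:
there the superlevel set at `s / 2` is not much larger than the one at `s`. -/
theorem HasMeasureDensity.exists_rpow_mul_rpow_volume_superlevel_le [NeZero n]
    (hD : HasMeasureDensity c₀ D) (hDm : MeasurableSet D) (hc₀ : 0 < c₀) (hδ : 0 ≤ δ) (hp : 0 ≤ p)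
    (hpn : δ * p / n < 1) :
    ∃ κ : ℝ≥0∞, κ ≠ ⊤ ∧ ∀ u, MemC0 D u → ∀ t : ℝ, 0 < t →
      ENNReal.ofReal t ^ p * volume {x | t ≤ |u x|} ^ (1 - δ * p / n) ≤
        κ * fracEnergy n δ p D u := by
  have hc : ENNReal.ofReal ((1 / 2) ^ p * (c₀ / 2) ^ (1 + δ * p / n)) ≠ 0 :=
    (ENNReal.ofReal_pos.2 (by positivity)).ne'
  have hA : (2 * 2 ^ p : ℝ≥0∞) ^ (1 / (1 - δ * p / n)) ≠ ⊤ := by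
    have := sub_pos.2 hpn
    finiteness
  refine ⟨2 * ((ENNReal.ofReal ((1 / 2) ^ p * (c₀ / 2) ^ (1 + δ * p / n)))⁻¹ *
    ((2 * 2 ^ p) ^ (1 / (1 - δ * p / n))) ^ (δ * p / n)), by finiteness, fun u hu t ht ↦ ?_⟩
  obtain ⟨s, hs, hmax⟩ := hu.exists_forall_rpow_mul_rpow_volume_superlevel_le hp (sub_pos.2 hpn)
  refine (hmax t ht).trans ?_
  rw [mul_assoc 2]
  gcongr 2 * ?_
  exact hD.rpow_mul_rpow_volume_superlevel_le_of_doubling hDm hc₀ hδ hp hpn hu hs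
    (le_mul_of_rpow_mul_rpow_half_le hp (sub_pos.2 hpn) hs (hmax (s / 2) (half_pos hs)))

theorem HasMeasureDensity.exists_rpow_volume_le_mul_fracCap [NeZero n]
    (hD : HasMeasureDensity c₀ D) (hDm : MeasurableSet D) (hc₀ : 0 < c₀) (hδ : 0 ≤ δ) (hp : 0 ≤ p)
    (hpn : δ * p / n < 1) :
    ∃ κ : ℝ≥0∞, κ ≠ ⊤ ∧ ∀ K : Set (Eucl n),
      volume K ^ (1 - δ * p / n) ≤ κ * fracCap n δ p K D := by
  obtain ⟨κ, hκ, hSobolev⟩ := hD.exists_rpow_mul_rpow_volume_superlevel_le hDm hc₀ hδ hp hpn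
  refine ⟨κ + 1, by finiteness, fun K ↦ ?_⟩
  rw [mul_comm (κ + 1), ← ENNReal.div_le_iff (by simp) (by finiteness), le_fracCap_iff]
  refine fun u hu huK ↦ ENNReal.div_le_of_le_mul' ?_
  have hK : K ⊆ {x | 1 ≤ |u x|} := fun x hx ↦ (huK x hx).trans (le_abs_self _)
  calc volume K ^ (1 - δ * p / n) ≤ volume {x | 1 ≤ |u x|} ^ (1 - δ * p / n) :=
        ENNReal.rpow_le_rpow (measure_mono hK) (sub_pos.2 hpn).le
    _ ≤ κ * fracEnergy n δ p D u := by simpa using hSobolev u hu 1 one_pos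
    _ ≤ (κ + 1) * fracEnergy n δ p D u := by gcongr; exact le_self_add

end Isocapacitary

section DyadicLayer

/-- The part of `t` between the heights `2 ^ (k - 1)` and `2 ^ k`. Composed with `|u|`, the layers
are the truncations of Maz'ya's argument. -/
noncomputable def dyadicLayer (k : ℤ) (t : ℝ) : ℝ := min t (2 ^ k) - min t (2 ^ (k - 1))

theorem continuous_dyadicLayer (k : ℤ) : Continuous (dyadicLayer k) := by
  unfold dyadicLayer
  fun_prop

theorem dyadicLayer_zero (k : ℤ) : dyadicLayer k 0 = 0 := by
  rw [dyadicLayer, min_eq_left (by positivity), min_eq_left (by positivity), sub_zero]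

theorem dyadicLayer_of_le {k : ℤ} {t : ℝ} (ht : 2 ^ k ≤ t) : dyadicLayer k t = 2 ^ (k - 1) := by
  have hk : (2 : ℝ) ^ k = 2 ^ (k - 1) * 2 := by rw [← zpow_add_one₀ two_ne_zero, sub_add_cancel]
  have hpos : (0 : ℝ) < 2 ^ (k - 1) := by positivity
  rw [dyadicLayer, min_eq_right ht, min_eq_right (by linarith), hk]
  ring

theorem enorm_dyadicLayer_sub {k : ℤ} {a b : ℝ} (hba : b ≤ a) :
    ‖dyadicLayer k a - dyadicLayer k b‖ₑ = volume (Ioc ((2 : ℝ) ^ (k - 1)) (2 ^ k) ∩ Ioc b a) := by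
  have hk : (2 : ℝ) ^ (k - 1) ≤ 2 ^ k := zpow_le_zpow_right₀ one_le_two (by omega)
  have hlayer :
      dyadicLayer k a - dyadicLayer k b = max (min (2 ^ k) a - max (2 ^ (k - 1)) b) 0 := by
    unfold dyadicLayer
    grind
  rw [Ioc_inter_Ioc, Real.volume_Ioc, hlayer, Real.enorm_of_nonneg (le_max_right _ _),
    ENNReal.ofReal_max, ENNReal.ofReal_zero, max_eq_left zero_le]

theorem tsum_enorm_dyadicLayer_sub_le (a b : ℝ) :
    ∑' k, ‖dyadicLayer k a - dyadicLayer k b‖ₑ ≤ ‖a - b‖ₑ := by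
  wlog hba : b ≤ a generalizing a b
  · simpa only [enorm_sub_rev] using this b a (le_of_not_ge hba)
  have hdisj : Pairwise (Function.onFun Disjoint
      fun k : ℤ ↦ Ioc ((2 : ℝ) ^ (k - 1)) (2 ^ k) ∩ Ioc b a) := fun j k hjk ↦
    ((zpow_right_mono₀ one_le_two).pairwise_disjoint_on_Ioc_pred hjk).mono
      inter_subset_left inter_subset_left
  calc ∑' k, ‖dyadicLayer k a - dyadicLayer k b‖ₑ
      = ∑' k : ℤ, volume (Ioc ((2 : ℝ) ^ (k - 1)) (2 ^ k) ∩ Ioc b a) := by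
        simp_rw [enorm_dyadicLayer_sub hba]
    _ ≤ volume (⋃ k : ℤ, Ioc ((2 : ℝ) ^ (k - 1)) (2 ^ k) ∩ Ioc b a) :=
        tsum_meas_le_meas_iUnion_of_disjoint _ (fun _ ↦ measurableSet_Ioc.inter measurableSet_Ioc)
          hdisj
    _ ≤ volume (Ioc b a) := measure_mono (iUnion_subset fun _ ↦ inter_subset_right)
    _ = ‖a - b‖ₑ := by rw [Real.volume_Ioc, Real.enorm_of_nonneg (sub_nonneg.2 hba)]

end DyadicLayer

section Truncation

variable {n : ℕ} {δ p : ℝ} {G : Set (Eucl n)} {u : Eucl n → ℝ}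

theorem tsum_fracKernel_dyadicLayer_le (hp : 1 ≤ p) (u : Eucl n → ℝ) (x y : Eucl n) :
    ∑' k, fracKernel n δ p (fun z ↦ dyadicLayer k |u z|) x y ≤ fracKernel n δ p u x y := by
  have hp₀ : 0 ≤ p := zero_le_one.trans hp
  simp_rw [fracKernel_eq_mul_fracWeight hp₀, ENNReal.tsum_mul_right]
  gcongr
  calc ∑' k, ‖dyadicLayer k |u x| - dyadicLayer k |u y|‖ₑ ^ p
      ≤ (∑' k, ‖dyadicLayer k |u x| - dyadicLayer k |u y|‖ₑ) ^ p := tsum_rpow_le_rpow_tsum _ hp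
    _ ≤ ‖|u x| - |u y|‖ₑ ^ p := by gcongr; exact tsum_enorm_dyadicLayer_sub_le _ _
    _ ≤ ‖u x - u y‖ₑ ^ p := by
        gcongr
        simpa only [enorm_le_iff_norm_le, Real.norm_eq_abs] using abs_abs_sub_abs_le (u x) (u y)

theorem tsum_fracEnergy_dyadicLayer_le (hp : 1 ≤ p) (hu : Measurable u) :
    ∑' k, fracEnergy n δ p G (fun z ↦ dyadicLayer k |u z|) ≤ fracEnergy n δ p G u := by
  have hmeas (k : ℤ) :
      Measurable (Function.uncurry (fracKernel n δ p fun z ↦ dyadicLayer k |u z|)) :=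
    measurable_fracKernel ((continuous_dyadicLayer k).measurable.comp hu.abs)
  calc ∑' k, fracEnergy n δ p G (fun z ↦ dyadicLayer k |u z|)
      = ∫⁻ x in G, ∫⁻ y in G, ∑' k, fracKernel n δ p (fun z ↦ dyadicLayer k |u z|) x y := by
        have hinner (k : ℤ) :
            Measurable fun x ↦ ∫⁻ y in G, fracKernel n δ p (fun z ↦ dyadicLayer k |u z|) x y :=
          (hmeas k).lintegral_prod_right'
        simp_rw [fracEnergy, lintegral_tsum fun k ↦ ((hmeas k).of_uncurry_left).aemeasurable]
        exact (lintegral_tsum fun k ↦ (hinner k).aemeasurable).symm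
    _ ≤ fracEnergy n δ p G u :=
        lintegral_mono fun x ↦ lintegral_mono fun y ↦ tsum_fracKernel_dyadicLayer_le hp u x y

theorem MemC0.rpow_mul_fracCap_superlevel_le_fracEnergy_dyadicLayer (hu : MemC0 G u) (hp : 0 ≤ p)
    (k : ℤ) :
    ‖(2 : ℝ) ^ (k - 1)‖ₑ ^ p * fracCap n δ p {x | 2 ^ k ≤ |u x|} G ≤
      fracEnergy n δ p G fun z ↦ dyadicLayer k |u z| := by
  set v : Eucl n → ℝ := fun z ↦ (2 ^ (k - 1))⁻¹ * dyadicLayer k |u z|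
  have hv : MemC0 G v := by
    refine hu.of_support_subset
      (continuous_const.mul ((continuous_dyadicLayer k).comp hu.continuous.abs)) fun z hz hz₀ ↦
        hz ?_
    simp only [v, hz₀, abs_zero, dyadicLayer_zero, mul_zero]
  have hv₁ : ∀ x ∈ {x | (2 : ℝ) ^ k ≤ |u x|}, 1 ≤ v x := fun x hx ↦ by
    simp only [v, dyadicLayer_of_le hx]
    rw [inv_mul_cancel₀ (by positivity)]
  have hlayer : (fun z ↦ dyadicLayer k |u z|) = fun z ↦ 2 ^ (k - 1) * v z := by
    funext z
    rw [mul_inv_cancel_left₀ (by positivity)]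
  rw [hlayer, fracEnergy_const_mul hp]
  gcongr
  exact fracCap_le_fracEnergy hv hv₁

theorem MemC0.tsum_rpow_mul_fracCap_superlevel_le (hu : MemC0 G u) (hp : 1 ≤ p) :
    ∑' k : ℤ, ‖(2 : ℝ) ^ (k - 1)‖ₑ ^ p * fracCap n δ p {x | 2 ^ k ≤ |u x|} G ≤
      fracEnergy n δ p G u :=
  (ENNReal.tsum_le_tsum fun k ↦ hu.rpow_mul_fracCap_superlevel_le_fracEnergy_dyadicLayer
    (zero_le_one.trans hp) k).trans (tsum_fracEnergy_dyadicLayer_le hp hu.continuous.measurable)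

end Truncation

section Cube

variable {n : ℕ}

theorem isClosed_cube (z : Eucl n) (r : ℝ) : IsClosed (cube n z r) := by
  simp only [cube, ofPred_forall]
  exact isClosed_iInter fun i ↦ isClosed_le (by fun_prop) continuous_const

theorem closedBall_subset_cube (z : Eucl n) (r : ℝ) : closedBall z r ⊆ cube n z r := fun x hx i ↦
  (PiLp.norm_apply_le (x - z) i).trans (mem_closedBall_iff_norm.1 hx)

theorem cube_subset_closedBall (z : Eucl n) {r : ℝ} (hr : 0 ≤ r) :
    cube n z r ⊆ closedBall z (n * r) := fun x hx ↦ by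
  have hn : (n : ℝ) ≤ (n : ℝ) ^ 2 := by exact_mod_cast Nat.le_self_pow two_ne_zero n
  rw [mem_closedBall, EuclideanSpace.dist_eq]
  refine Real.sqrt_le_iff.2 ⟨by positivity, ?_⟩
  calc ∑ i, dist (x i) (z i) ^ 2 ≤ ∑ _i : Fin n, r ^ 2 :=
        Finset.sum_le_sum fun i _ ↦ pow_le_pow_left₀ dist_nonneg (hx i) 2
    _ = n * r ^ 2 := by simp
    _ ≤ (n * r) ^ 2 := by rw [mul_pow]; gcongr

theorem volume_le_ofReal_mul_diam_pow {s : Set (Eucl n)} (hs : Bornology.IsBounded s) :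
    volume s ≤ ENNReal.ofReal (volume.real (ball (0 : Eucl n) 1) * diam s ^ n) := by
  rcases s.eq_empty_or_nonempty with rfl | ⟨x, hx⟩
  · simp
  calc volume s ≤ volume (closedBall x (diam s)) :=
        measure_mono fun y hy ↦ dist_le_diam_of_mem hs hy hx
    _ = ENNReal.ofReal (volume.real (ball (0 : Eucl n) 1) * diam s ^ n) := by
        rw [Measure.addHaar_closedBall _ _ diam_nonneg, finrank_euclideanSpace_fin, mul_comm,
          ENNReal.ofReal_mul measureReal_nonneg, ofReal_measureReal measure_ball_lt_top.ne]

namespace IsDyadicCube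

variable {Q : Set (Eucl n)}

theorem exists_eq_cube (hQ : IsDyadicCube n Q) : ∃ z r, 0 < r ∧ Q = cube n z r := by
  obtain ⟨k, w, rfl⟩ := hQ
  refine ⟨WithLp.toLp 2 fun i ↦ (w i + 1 / 2) * 2 ^ k, 2 ^ k / 2, by positivity, ?_⟩
  ext x
  refine forall_congr' fun i ↦ ?_
  rw [abs_le]
  constructor <;> rintro ⟨h₁, h₂⟩ <;> constructor <;> linarith

theorem isClosed (hQ : IsDyadicCube n Q) : IsClosed Q := by
  obtain ⟨z, r, -, rfl⟩ := hQ.exists_eq_cube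
  exact isClosed_cube z r

theorem isBounded (hQ : IsDyadicCube n Q) : Bornology.IsBounded Q := by
  obtain ⟨z, r, hr, rfl⟩ := hQ.exists_eq_cube
  exact isBounded_closedBall.subset (cube_subset_closedBall z hr.le)

variable [NeZero n]

theorem diam_pos (hQ : IsDyadicCube n Q) : 0 < diam Q := by
  obtain ⟨z, r, hr, rfl⟩ := hQ.exists_eq_cube
  calc 0 < 2 * r := by positivity
    _ = diam (closedBall z r) := (diam_closedBall_eq z hr.le).symm
    _ ≤ diam (cube n z r) := diam_mono (closedBall_subset_cube z r)
        (isBounded_closedBall.subset (cube_subset_closedBall z hr.le))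

theorem exists_closedBall_subset (hQ : IsDyadicCube n Q) :
    ∃ z, closedBall z (diam Q / (2 * n)) ⊆ Q := by
  obtain ⟨z, r, hr, rfl⟩ := hQ.exists_eq_cube
  have hn : (0 : ℝ) < n := Nat.cast_pos.2 (NeZero.pos n)
  refine ⟨z, (closedBall_subset_closedBall ?_).trans (closedBall_subset_cube z r)⟩
  rw [div_le_iff₀ (by positivity)]
  linarith [diam_le_of_subset_closedBall (by positivity) (cube_subset_closedBall z hr.le)]

theorem ofReal_mul_diam_pow_le_volume_interior (hQ : IsDyadicCube n Q) :
    ENNReal.ofReal (volume.real (ball (0 : Eucl n) 1) * (diam Q / (2 * n)) ^ n) ≤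
      volume (interior Q) := by
  obtain ⟨z, hz⟩ := hQ.exists_closedBall_subset
  have hn : (0 : ℝ) < n := Nat.cast_pos.2 (NeZero.pos n)
  have hd := hQ.diam_pos
  rw [← volume_ball_eq_ofReal z (by positivity)]
  exact measure_mono (interior_maximal (ball_subset_closedBall.trans hz) isOpen_ball)

end IsDyadicCube

end Cube

section Whitney

variable {n : ℕ} {D : Set (Eucl n)} {W : Set (Set (Eucl n))} {Q : Set (Eucl n)} {x : Eucl n}

/-- The enlargement `Q*` of a Whitney cube `Q`: its neighbourhood of width `diam Q / 2`, on which
the cutoff function of `Q` lives. -/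
def dilatedCube (Q : Set (Eucl n)) : Set (Eucl n) := thickening (diam Q / 2) Q

theorem isOpen_dilatedCube (Q : Set (Eucl n)) : IsOpen (dilatedCube Q) := isOpen_thickening

theorem subset_ball_of_mem_dilatedCube (hQ : Bornology.IsBounded Q) (hx : x ∈ dilatedCube Q) :
    Q ⊆ ball x (2 * diam Q) := fun z hz ↦ by
  obtain ⟨y, hy, hxy⟩ := mem_thickening_iff.1 hx
  rw [mem_ball]
  linarith [dist_triangle_right z x y, dist_le_diam_of_mem hQ hz hy, dist_nonneg (x := x) (y := y)]

namespace IsWhitneyDecomposition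

theorem isDyadicCube (hW : IsWhitneyDecomposition n D W) (hQ : Q ∈ W) : IsDyadicCube n Q :=
  hW.2.1 Q hQ

theorem subset (hW : IsWhitneyDecomposition n D W) (hQ : Q ∈ W) : Q ⊆ D :=
  hW.2.2.1 ▸ subset_sUnion_of_mem hQ

theorem diam_le_infDist (hW : IsWhitneyDecomposition n D W) (hQ : Q ∈ W) (hx : x ∈ Q) :
    diam Q ≤ infDist x (frontier D) :=
  (hW.2.2.2.2 Q hQ).1 x hx

theorem half_diam_le_infDist (hW : IsWhitneyDecomposition n D W) (hQ : Q ∈ W)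
    (hx : x ∈ dilatedCube Q) : diam Q / 2 ≤ infDist x (frontier D) := by
  obtain ⟨y, hy, hxy⟩ := mem_thickening_iff.1 hx
  have h := infDist_le_infDist_add_dist (s := frontier D) (x := y) (y := x)
  rw [dist_comm] at h
  linarith [hW.diam_le_infDist hQ hy]

theorem infDist_le_six_mul_diam (hW : IsWhitneyDecomposition n D W) (hQ : Q ∈ W)
    (hx : x ∈ dilatedCube Q) : infDist x (frontier D) ≤ 6 * diam Q := by
  obtain ⟨w, hw, hwd⟩ := (hW.2.2.2.2 Q hQ).2
  have hxw : dist w x < 2 * diam Q :=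
    subset_ball_of_mem_dilatedCube (hW.isDyadicCube hQ).isBounded hx hw
  rw [dist_comm] at hxw
  linarith [infDist_le_infDist_add_dist (s := frontier D) (x := x) (y := w)]

theorem dilatedCube_subset (hW : IsWhitneyDecomposition n D W) (hQ : Q ∈ W) :
    dilatedCube Q ⊆ D := fun x hx ↦ by
  obtain ⟨y, hy, hxy⟩ := mem_thickening_iff.1 hx
  refine ball_subset_of_le_infDist_frontier (hW.subset hQ hy) (hW.diam_le_infDist hQ hy) ?_
  rw [mem_ball]
  linarith [diam_nonneg (s := Q)]

variable [NeZero n]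

theorem infDist_frontier_pos (hW : IsWhitneyDecomposition n D W) (hx : x ∈ D) :
    0 < infDist x (frontier D) := by
  rw [← hW.2.2.1] at hx
  obtain ⟨Q, hQ, hxQ⟩ := hx
  exact (hW.isDyadicCube hQ).diam_pos.trans_le (hW.diam_le_infDist hQ hxQ)

theorem isOpen (hW : IsWhitneyDecomposition n D W) : IsOpen D :=
  Metric.isOpen_iff.2 fun _ hx ↦
    ⟨_, hW.infDist_frontier_pos hx, ball_subset_of_le_infDist_frontier hx le_rfl⟩

theorem tsum_indicator_dilatedCube_le (hW : IsWhitneyDecomposition n D W) (hx : x ∈ D) :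
    ∑' Q : W, (dilatedCube (Q : Set (Eucl n))).indicator (1 : Eucl n → ℝ≥0∞) x ≤
      ENNReal.ofReal ((48 * n) ^ n) := by
  have hn : (0 : ℝ) < n := Nat.cast_pos.2 (NeZero.pos n)
  have hω := volume_real_unitBall_pos n
  set ω := volume.real (ball (0 : Eucl n) 1)
  set ρ := infDist x (frontier D)
  have hρ : 0 < ρ := hW.infDist_frontier_pos hx
  have hvol : ∀ Q : W, x ∈ dilatedCube (Q : Set (Eucl n)) →
      ENNReal.ofReal (ω * (ρ / (12 * n)) ^ n) ≤ volume (interior (Q : Set (Eucl n))) := by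
    refine fun Q hxQ ↦ le_trans ?_ (hW.isDyadicCube Q.2).ofReal_mul_diam_pow_le_volume_interior
    have : ρ / (12 * n) ≤ diam (Q : Set (Eucl n)) / (2 * n) := by
      rw [div_le_div_iff₀ (by positivity) (by positivity)]
      nlinarith [hW.infDist_le_six_mul_diam Q.2 hxQ]
    gcongr
  have hball : ∀ Q : W, x ∈ dilatedCube (Q : Set (Eucl n)) →
      interior (Q : Set (Eucl n)) ⊆ ball x (4 * ρ) := fun Q hxQ ↦
    interior_subset.trans <|
      (subset_ball_of_mem_dilatedCube (hW.isDyadicCube Q.2).isBounded hxQ).trans <|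
        ball_subset_ball (by linarith [hW.half_diam_le_infDist Q.2 hxQ])
  have hdisj : Pairwise (Function.onFun Disjoint fun Q : W ↦ interior (Q : Set (Eucl n))) :=
    fun Q R hQR ↦ disjoint_iff_inter_eq_empty.2
      (hW.2.2.2.1 Q.2 R.2 (Subtype.coe_injective.ne hQR))
  have hpack := tsum_indicator_mul_le_measure (μ := volume) (fun _ ↦ isOpen_interior.measurableSet)
    hdisj (s := {Q : W | x ∈ dilatedCube (Q : Set (Eucl n))}) hvol hball
  have hconst : volume (ball x (4 * ρ)) =
      ENNReal.ofReal ((48 * n) ^ n) * ENNReal.ofReal (ω * (ρ / (12 * n)) ^ n) := by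
    rw [volume_ball_eq_ofReal _ (by positivity), ← ENNReal.ofReal_mul (by positivity),
      mul_left_comm, ← mul_pow]
    congr 3
    field_simp
    norm_num
  rw [hconst] at hpack
  exact (ENNReal.mul_le_mul_iff_left (ENNReal.ofReal_pos.2 (by positivity)).ne'
    ENNReal.ofReal_ne_top).1 hpack

theorem tsum_setLIntegral_dilatedCube_le (hW : IsWhitneyDecomposition n D W)
    {f : Eucl n → ℝ≥0∞} (hf : AEMeasurable f (volume.restrict D)) :
    ∑' Q : W, ∫⁻ x in dilatedCube (Q : Set (Eucl n)), f x ≤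
      ENNReal.ofReal ((48 * n) ^ n) * ∫⁻ x in D, f x := by
  have := hW.1.to_subtype
  calc ∑' Q : W, ∫⁻ x in dilatedCube (Q : Set (Eucl n)), f x
      = ∑' Q : W, ∫⁻ x in dilatedCube (Q : Set (Eucl n)), f x ∂(volume.restrict D) := by
        refine tsum_congr fun Q ↦ ?_
        rw [Measure.restrict_restrict_of_subset (hW.dilatedCube_subset Q.2)]
    _ ≤ ENNReal.ofReal ((48 * n) ^ n) * ∫⁻ x in D, f x :=
        tsum_setLIntegral_le_of_tsum_indicator_le (fun _ ↦ (isOpen_dilatedCube _).measurableSet)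
          (ae_restrict_of_forall_mem hW.isOpen.measurableSet
            fun _ hx ↦ hW.tsum_indicator_dilatedCube_le hx) hf

end IsWhitneyDecomposition

end Whitney

section StrongType

theorem enorm_rpow_le_tsum_indicator {X : Type*} (u : X → ℝ) {q : ℝ} (hq : 0 < q) (x : X) :
    ‖u x‖ₑ ^ q ≤
      ∑' k : ℤ, {x | (2 : ℝ) ^ k ≤ |u x|}.indicator (fun _ ↦ ‖(2 : ℝ) ^ (k + 1)‖ₑ ^ q) x := by
  rcases eq_or_ne (u x) 0 with hx | hx
  · simp [hx, ENNReal.zero_rpow_of_pos hq]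
  obtain ⟨k, hk, hk'⟩ := exists_mem_Ico_zpow (abs_pos.2 hx) one_lt_two
  refine le_trans ?_ (ENNReal.le_tsum k)
  rw [indicator_of_mem (by exact hk)]
  gcongr
  rw [enorm_le_iff_norm_le, Real.norm_eq_abs, Real.norm_of_nonneg (by positivity)]
  exact hk'.le

theorem lintegral_enorm_rpow_le_tsum_mul_measure_superlevel {X : Type*} [MeasurableSpace X]
    (μ : Measure X) {u : X → ℝ} (hu : Measurable u) {q : ℝ} (hq : 0 < q) :
    ∫⁻ x, ‖u x‖ₑ ^ q ∂μ ≤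
      ∑' k : ℤ, ‖(2 : ℝ) ^ (k + 1)‖ₑ ^ q * μ {x | (2 : ℝ) ^ k ≤ |u x|} := by
  have hmeas (k : ℤ) : MeasurableSet {x | (2 : ℝ) ^ k ≤ |u x|} :=
    measurableSet_le measurable_const hu.abs
  calc ∫⁻ x, ‖u x‖ₑ ^ q ∂μ
      ≤ ∫⁻ x, ∑' k : ℤ, {x | (2 : ℝ) ^ k ≤ |u x|}.indicator
          (fun _ ↦ ‖(2 : ℝ) ^ (k + 1)‖ₑ ^ q) x ∂μ :=
        lintegral_mono fun x ↦ enorm_rpow_le_tsum_indicator u hq x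
    _ = ∑' k : ℤ, ‖(2 : ℝ) ^ (k + 1)‖ₑ ^ q * μ {x | (2 : ℝ) ^ k ≤ |u x|} := by
        rw [lintegral_tsum fun k ↦ (measurable_const.indicator (hmeas k)).aemeasurable]
        exact tsum_congr fun k ↦ lintegral_indicator_const (hmeas k) _

theorem MemC0.lintegral_enorm_rpow_le_of_measure_le {n : ℕ} {δ p q : ℝ} {G : Set (Eucl n)}
    {u : Eucl n → ℝ} (hu : MemC0 G u) (hp : 1 ≤ p) (hpq : p ≤ q) {μ : Measure (Eucl n)}
    {c : ℝ≥0∞}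
    (hμ : ∀ K, IsCompact K → K ⊆ G → μ K ≤ c * fracCap n δ p K G ^ (q / p)) :
    ∫⁻ x, ‖u x‖ₑ ^ q ∂μ ≤ c * (‖(4 : ℝ)‖ₑ ^ p * fracEnergy n δ p G u) ^ (q / p) := by
  have hp₀ : 0 < p := by linarith
  have hqp : 1 ≤ q / p := (one_le_div hp₀).2 hpq
  have hpow (k : ℤ) : ‖(2 : ℝ) ^ (k + 1)‖ₑ ^ q =
      (‖(4 : ℝ)‖ₑ ^ p * ‖(2 : ℝ) ^ (k - 1)‖ₑ ^ p) ^ (q / p) := by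
    rw [← ENNReal.mul_rpow_of_nonneg _ _ hp₀.le, ← ENNReal.rpow_mul, mul_div_cancel₀ _ hp₀.ne',
      ← enorm_mul]
    congr 2
    rw [show (4 : ℝ) = 2 ^ (2 : ℤ) by norm_num, ← zpow_add₀ two_ne_zero]
    ring_nf
  calc ∫⁻ x, ‖u x‖ₑ ^ q ∂μ
      ≤ ∑' k : ℤ, ‖(2 : ℝ) ^ (k + 1)‖ₑ ^ q * μ {x | (2 : ℝ) ^ k ≤ |u x|} :=
        lintegral_enorm_rpow_le_tsum_mul_measure_superlevel μ hu.continuous.measurable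
          (by linarith)
    _ ≤ ∑' k : ℤ, ‖(2 : ℝ) ^ (k + 1)‖ₑ ^ q *
          (c * fracCap n δ p {x | (2 : ℝ) ^ k ≤ |u x|} G ^ (q / p)) := by
        gcongr with k
        exact hμ _ (hu.isCompact_superlevel (by positivity)) (hu.superlevel_subset (by positivity))
    _ = c * ∑' k : ℤ, (‖(4 : ℝ)‖ₑ ^ p * (‖(2 : ℝ) ^ (k - 1)‖ₑ ^ p *
          fracCap n δ p {x | (2 : ℝ) ^ k ≤ |u x|} G)) ^ (q / p) := by
        rw [← ENNReal.tsum_mul_left]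
        refine tsum_congr fun k ↦ ?_
        rw [hpow, mul_left_comm, ← ENNReal.mul_rpow_of_nonneg _ _ (by positivity), mul_assoc]
    _ ≤ c * (‖(4 : ℝ)‖ₑ ^ p * fracEnergy n δ p G u) ^ (q / p) := by
        gcongr
        refine (tsum_rpow_le_rpow_tsum _ hqp).trans ?_
        rw [ENNReal.tsum_mul_left]
        gcongr
        exact hu.tsum_rpow_mul_fracCap_superlevel_le hp

end StrongType

section Hardy

variable {n : ℕ} {δ p q : ℝ} {D : Set (Eucl n)}

/-- The exponent of the boundary distance in the `(δ, q, p)`-Hardy inequality. -/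
noncomputable def hardyExponent (n : ℕ) (δ p q : ℝ) : ℝ := q * (δ + n * (1 / q - 1 / p))

theorem hardyExponent_nonneg [NeZero n] (hq : 0 ≤ q) (h : 1 / p - 1 / q ≤ δ / n) :
    0 ≤ hardyExponent n δ p q := by
  have hn : (0 : ℝ) < n := Nat.cast_pos.2 (NeZero.pos n)
  have h' := (le_div_iff₀ hn).1 h
  exact mul_nonneg hq (by linarith)

theorem hardyExponent_div_add [NeZero n] (hp : p ≠ 0) (hq : q ≠ 0) :
    hardyExponent n δ p q / n + (1 - δ * p / n) * (q / p) = 1 := by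
  have hn : (n : ℝ) ≠ 0 := NeZero.ne _
  rw [hardyExponent]
  field_simp
  ring

/-- The weighted measure `dist(x, ∂D)^(-α) dx` on `D`, with respect to which the left-hand side of
the Hardy inequality is the integral of `|u| ^ q`. -/
noncomputable def hardyMeasure (D : Set (Eucl n)) (α : ℝ) : Measure (Eucl n) :=
  (volume.restrict D).withDensity fun x ↦ ENNReal.ofReal (infDist x (frontier D) ^ α)⁻¹

theorem measurable_ofReal_infDist_rpow_inv (D : Set (Eucl n)) (α : ℝ) :
    Measurable fun x ↦ ENNReal.ofReal (infDist x (frontier D) ^ α)⁻¹ :=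
  (measurable_infDist.pow_const α).inv.ennreal_ofReal

theorem hasFracHardy_iff {C : ℝ} (hq : 0 ≤ q) :
    HasFracHardy n δ p q C D ↔ ∀ u, MemC0 D u →
      ∫⁻ x, ‖u x‖ₑ ^ q ∂hardyMeasure D (hardyExponent n δ p q) ≤
        ENNReal.ofReal C * fracEnergy n δ p D u ^ (q / p) := by
  have hint {u : Eucl n → ℝ} (hu : Continuous u) :
      ∫⁻ x, ‖u x‖ₑ ^ q ∂hardyMeasure D (hardyExponent n δ p q) = ∫⁻ x in D,
        ENNReal.ofReal (|u x| ^ q / infDist x (frontier D) ^ (q * (δ + n * (1 / q - 1 / p)))) := by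
    rw [hardyMeasure, lintegral_withDensity_eq_lintegral_mul _
      (measurable_ofReal_infDist_rpow_inv D _) (hu.measurable.enorm.pow_const q)]
    refine lintegral_congr fun x ↦ ?_
    rw [Pi.mul_apply, mul_comm, div_eq_mul_inv, ENNReal.ofReal_mul (by positivity),
      ← ENNReal.ofReal_rpow_of_nonneg (abs_nonneg _) hq, Real.enorm_eq_ofReal_abs, hardyExponent]
  exact ⟨fun h u hu ↦ (hint hu.continuous).trans_le (h u hu.1 hu.2 hu.3),
    fun h u hu₁ hu₂ hu₃ ↦ (hint hu₁).symm.trans_le (h u ⟨hu₁, hu₂, hu₃⟩)⟩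

/-- Condition (B): the power `cap_{δ,p}(·, D)^(q/p)` of the capacity is quasiadditive, with constant
`N ^ (q/p)`, with respect to the Whitney decomposition `W` of `D`. -/
def IsCapQuasiadditive (n : ℕ) (δ p q N : ℝ) (D : Set (Eucl n)) (W : Set (Set (Eucl n))) : Prop :=
  ∀ K : Set (Eucl n), IsCompact K → K ⊆ D →
    (∑' Q : W, fracCap n δ p (K ∩ (Q : Set (Eucl n))) D ^ (q / p)) ^ (p / q) ≤
      ENNReal.ofReal N * fracCap n δ p K D

theorem isCapQuasiadditive_iff {N : ℝ} {W : Set (Set (Eucl n))} (hp : 0 < p) (hq : 0 < q) :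
    IsCapQuasiadditive n δ p q N D W ↔ ∀ K : Set (Eucl n), IsCompact K → K ⊆ D →
      ∑' Q : W, fracCap n δ p (K ∩ (Q : Set (Eucl n))) D ^ (q / p) ≤
        (ENNReal.ofReal N * fracCap n δ p K D) ^ (q / p) := by
  simp only [IsCapQuasiadditive, ← ENNReal.le_rpow_inv_iff (div_pos hp hq), inv_div]

/-- The isocapacitary inequality `|S| ^ (1 - δp/n) ≤ κ cap(S)` accounts for the power
`(1 - δp/n)(q/p)` of `|S|`; the remaining power `α/n` is absorbed by `diam Q ^ (-α)`. -/
theorem ofReal_diam_rpow_inv_mul_volume_le [NeZero n] (hp : 0 < p) (hq : 0 < q)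
    (hpn : δ * p / n < 1) (h : 1 / p - 1 / q ≤ δ / n) {κ : ℝ≥0∞} {Q S : Set (Eucl n)}
    (hS : volume S ^ (1 - δ * p / n) ≤ κ * fracCap n δ p S D) (hQ : Bornology.IsBounded Q)
    (hQd : 0 < diam Q) (hSQ : S ⊆ Q) :
    ENNReal.ofReal (diam Q ^ hardyExponent n δ p q)⁻¹ * volume S ≤
      ENNReal.ofReal (volume.real (ball (0 : Eucl n) 1) ^ (hardyExponent n δ p q / n)) *
        (κ * fracCap n δ p S D) ^ (q / p) := by
  have hn : (0 : ℝ) < n := Nat.cast_pos.2 (NeZero.pos n)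
  have hα : 0 ≤ hardyExponent n δ p q := hardyExponent_nonneg hq.le h
  have hsum := hardyExponent_div_add (n := n) (δ := δ) hp.ne' hq.ne'
  set α := hardyExponent n δ p q
  set ω := volume.real (ball (0 : Eucl n) 1)
  have hω : 0 < ω := volume_real_unitBall_pos n
  have hvol : volume S ≤ ENNReal.ofReal (ω * diam Q ^ n) :=
    (measure_mono hSQ).trans (volume_le_ofReal_mul_diam_pow hQ)
  have hsplit : volume S = volume S ^ (α / n) * (volume S ^ (1 - δ * p / n)) ^ (q / p) := by
    rw [← ENNReal.rpow_mul, ← ENNReal.rpow_add_of_nonneg _ _ (by positivity)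
      (mul_nonneg (sub_nonneg.2 hpn.le) (by positivity)), hsum, ENNReal.rpow_one]
  have hscale : ENNReal.ofReal (diam Q ^ α)⁻¹ * ENNReal.ofReal (ω * diam Q ^ n) ^ (α / n) =
      ENNReal.ofReal (ω ^ (α / n)) := by
    rw [ENNReal.ofReal_rpow_of_nonneg (by positivity) (by positivity),
      ← ENNReal.ofReal_mul (by positivity), Real.mul_rpow hω.le (by positivity),
      ← Real.rpow_natCast (diam Q), ← Real.rpow_mul hQd.le, mul_div_cancel₀ _ hn.ne',
      mul_left_comm, inv_mul_cancel₀ (by positivity), mul_one]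
  calc ENNReal.ofReal (diam Q ^ α)⁻¹ * volume S
      = ENNReal.ofReal (diam Q ^ α)⁻¹ *
          (volume S ^ (α / n) * (volume S ^ (1 - δ * p / n)) ^ (q / p)) := by rw [← hsplit]
    _ ≤ ENNReal.ofReal (diam Q ^ α)⁻¹ *
          (ENNReal.ofReal (ω * diam Q ^ n) ^ (α / n) * (κ * fracCap n δ p S D) ^ (q / p)) := by
        gcongr
    _ = ENNReal.ofReal (ω ^ (α / n)) * (κ * fracCap n δ p S D) ^ (q / p) := by
        rw [← mul_assoc, hscale]

namespace IsWhitneyDecomposition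

variable {W : Set (Set (Eucl n))}

theorem hardyMeasure_le_tsum [NeZero n] (hW : IsWhitneyDecomposition n D W) {α : ℝ} (hα : 0 ≤ α)
    {K : Set (Eucl n)} (hK : IsCompact K) (hKD : K ⊆ D) :
    hardyMeasure D α K ≤ ∑' Q : W,
      ENNReal.ofReal (diam (Q : Set (Eucl n)) ^ α)⁻¹ * volume (K ∩ (Q : Set (Eucl n))) := by
  have := hW.1.to_subtype
  have hcover : K = ⋃ Q : W, K ∩ (Q : Set (Eucl n)) := by
    rw [← inter_iUnion, ← sUnion_eq_iUnion, hW.2.2.1, inter_eq_left.2 hKD]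
  calc hardyMeasure D α K ≤ ∑' Q : W, hardyMeasure D α (K ∩ (Q : Set (Eucl n))) := by
        conv_lhs => rw [hcover]
        exact measure_iUnion_le _
    _ ≤ _ := by
        gcongr with Q
        have hQ := hW.isDyadicCube Q.2
        have hmeas : MeasurableSet (K ∩ (Q : Set (Eucl n))) :=
          hK.measurableSet.inter hQ.isClosed.measurableSet
        rw [hardyMeasure, withDensity_apply _ hmeas,
          Measure.restrict_restrict_of_subset (inter_subset_left.trans hKD), ← setLIntegral_const]
        refine setLIntegral_mono' hmeas fun x hx ↦ ?_
        have hd := hQ.diam_pos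
        gcongr
        exact hW.diam_le_infDist Q.2 hx.2

theorem exists_hasFracHardy [NeZero n] (hW : IsWhitneyDecomposition n D W) (hp : 1 ≤ p)
    (hpq : p ≤ q) (hpn : δ * p / n < 1) (h : 1 / p - 1 / q ≤ δ / n) {κ : ℝ≥0∞} (hκ : κ ≠ ⊤)
    (hiso : ∀ K, volume K ^ (1 - δ * p / n) ≤ κ * fracCap n δ p K D) {N : ℝ}
    (hN : IsCapQuasiadditive n δ p q N D W) : ∃ C : ℝ, 0 < C ∧ HasFracHardy n δ p q C D := by
  have hp₀ : 0 < p := by linarith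
  have hq₀ : 0 < q := by linarith
  set α := hardyExponent n δ p q
  set a := ENNReal.ofReal (volume.real (ball (0 : Eucl n) 1) ^ (α / n)) * κ ^ (q / p) *
    ENNReal.ofReal N ^ (q / p) with ha
  have hmeas (K : Set (Eucl n)) (hK : IsCompact K) (hKD : K ⊆ D) :
      hardyMeasure D α K ≤ a * fracCap n δ p K D ^ (q / p) :=
    calc hardyMeasure D α K
        ≤ ∑' Q : W, ENNReal.ofReal (volume.real (ball (0 : Eucl n) 1) ^ (α / n)) *
            (κ * fracCap n δ p (K ∩ (Q : Set (Eucl n))) D) ^ (q / p) := by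
          refine (hW.hardyMeasure_le_tsum (hardyExponent_nonneg hq₀.le h) hK hKD).trans
            (ENNReal.tsum_le_tsum fun Q ↦ ?_)
          have hQ := hW.isDyadicCube Q.2
          exact ofReal_diam_rpow_inv_mul_volume_le hp₀ hq₀ hpn h (hiso _) hQ.isBounded hQ.diam_pos
            inter_subset_right
      _ = ENNReal.ofReal (volume.real (ball (0 : Eucl n) 1) ^ (α / n)) * κ ^ (q / p) *
            ∑' Q : W, fracCap n δ p (K ∩ (Q : Set (Eucl n))) D ^ (q / p) := by
          simp_rw [← ENNReal.tsum_mul_left, mul_assoc,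
            ENNReal.mul_rpow_of_nonneg _ _ (div_nonneg hq₀.le hp₀.le)]
      _ ≤ a * fracCap n δ p K D ^ (q / p) := by
          rw [ha, mul_assoc _ (ENNReal.ofReal N ^ _),
            ← ENNReal.mul_rpow_of_nonneg _ _ (by positivity)]
          gcongr
          exact (isCapQuasiadditive_iff hp₀ hq₀).1 hN K hK hKD
  have hC : a * (‖(4 : ℝ)‖ₑ ^ p) ^ (q / p) ≠ ⊤ := by finiteness
  obtain ⟨C, hC₀, hC⟩ := exists_pos_le_ofReal hC
  refine ⟨C, hC₀, (hasFracHardy_iff hq₀.le).2 fun u hu ↦ ?_⟩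
  refine (hu.lintegral_enorm_rpow_le_of_measure_le hp hpq hmeas).trans ?_
  rw [ENNReal.mul_rpow_of_nonneg _ _ (by positivity), ← mul_assoc]
  gcongr

end IsWhitneyDecomposition

end Hardy

section TruncatedPower

theorem integrableOn_min_one_rpow_mul_rpow {p s : ℝ} (hs : s < -1) (hps : -1 < p + s) :
    IntegrableOn (fun r : ℝ ↦ min 1 r ^ p * r ^ s) (Ioi 0) := by
  rw [← Ioc_union_Ioi_eq_Ioi zero_le_one]
  refine .union ?_ ?_
  · refine ((intervalIntegrable_iff_integrableOn_Ioc_of_le zero_le_one).1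
      (intervalIntegral.intervalIntegrable_rpow' hps)).congr_fun (fun r hr ↦ ?_) measurableSet_Ioc
    simp only [min_eq_right hr.2, Real.rpow_add hr.1]
  · refine (integrableOn_Ioi_rpow_of_lt hs one_pos).congr_fun (fun r hr ↦ ?_) measurableSet_Ioi
    simp only [min_eq_left (mem_Ioi.1 hr).le, Real.one_rpow, one_mul]

variable {E : Type*} [NormedAddCommGroup E] [NormedSpace ℝ E] [FiniteDimensional ℝ E]
  [MeasurableSpace E] [BorelSpace E] {μ : Measure E} [μ.IsAddHaarMeasure] {p s : ℝ}

theorem integrable_min_one_norm_rpow_div_rpow [Nontrivial E] (hs : Module.finrank ℝ E < s)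
    (hsp : s < Module.finrank ℝ E + p) :
    Integrable (fun z : E ↦ min 1 ‖z‖ ^ p / ‖z‖ ^ s) μ := by
  refine (integrable_fun_norm_addHaar μ (f := fun r ↦ min 1 r ^ p / r ^ s)).2 ?_
  refine (integrableOn_min_one_rpow_mul_rpow (p := p) (s := Module.finrank ℝ E - 1 - s)
    (by linarith) (by linarith)).congr_fun (fun r hr ↦ ?_) measurableSet_Ioi
  have hd : ((Module.finrank ℝ E - 1 : ℕ) : ℝ) = Module.finrank ℝ E - 1 :=
    Nat.cast_pred Module.finrank_pos
  simp only [smul_eq_mul]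
  rw [← Real.rpow_natCast, hd, Real.rpow_sub hr]
  ring

theorem lintegral_min_one_mul_dist_rpow_div_rpow (x : E) {L : ℝ} (hL : 0 < L) :
    ∫⁻ y, ENNReal.ofReal (min 1 (L * dist x y) ^ p / dist x y ^ s) ∂μ =
      ENNReal.ofReal (L ^ (s - Module.finrank ℝ E)) *
        ∫⁻ z, ENNReal.ofReal (min 1 ‖z‖ ^ p / ‖z‖ ^ s) ∂μ := by
  have hscale (z : E) : min 1 (L * ‖z‖) ^ p / ‖z‖ ^ s =
      L ^ s * (min 1 ‖L • z‖ ^ p / ‖L • z‖ ^ s) := by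
    rw [norm_smul, Real.norm_of_nonneg hL.le, Real.mul_rpow hL.le (norm_nonneg z)]
    field_simp
  have hmeas : Measurable fun z : E ↦ ENNReal.ofReal (min 1 ‖z‖ ^ p / ‖z‖ ^ s) := by fun_prop
  calc ∫⁻ y, ENNReal.ofReal (min 1 (L * dist x y) ^ p / dist x y ^ s) ∂μ
      = ∫⁻ z, ENNReal.ofReal (min 1 (L * ‖z‖) ^ p / ‖z‖ ^ s) ∂μ := by
        simp_rw [dist_eq_norm]
        exact lintegral_sub_left_eq_self
          (fun z : E ↦ ENNReal.ofReal (min 1 (L * ‖z‖) ^ p / ‖z‖ ^ s)) x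
    _ = ENNReal.ofReal (L ^ s) *
          ∫⁻ z, ENNReal.ofReal (min 1 ‖z‖ ^ p / ‖z‖ ^ s) ∂(μ.map (L • ·)) := by
        simp_rw [hscale, ENNReal.ofReal_mul (Real.rpow_nonneg hL.le s)]
        rw [lintegral_const_mul' _ _ ENNReal.ofReal_ne_top,
          lintegral_map hmeas (measurable_const_smul L)]
    _ = _ := by
        rw [Measure.map_addHaar_smul μ hL.ne', lintegral_smul_measure, smul_eq_mul, ← mul_assoc,
          ← ENNReal.ofReal_mul (by positivity), abs_of_pos (by positivity), Real.rpow_sub hL,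
          Real.rpow_natCast, div_eq_mul_inv]

end TruncatedPower

section Cutoff

variable {n : ℕ} {δ p : ℝ} {D : Set (Eucl n)}

theorem exists_lintegral_fracKernel_le_of_lipschitz [NeZero n] (hδ : δ ∈ Ioo (0 : ℝ) 1)
    (hp : 0 < p) : ∃ J : ℝ≥0∞, J ≠ ⊤ ∧ ∀ (φ : Eucl n → ℝ) (L : ℝ≥0), 0 < L →
      LipschitzWith L φ → (∀ x, φ x ∈ Icc (0 : ℝ) 1) → ∀ x,
        ∫⁻ y, fracKernel n δ p φ x y ≤ ENNReal.ofReal (L ^ (δ * p)) * J := by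
  have hdim : Module.finrank ℝ (Eucl n) = n := finrank_euclideanSpace_fin
  have hJ : Integrable (fun z : Eucl n ↦ min 1 ‖z‖ ^ p / ‖z‖ ^ ((n : ℝ) + δ * p)) :=
    integrable_min_one_norm_rpow_div_rpow (by rw [hdim]; nlinarith [hδ.1])
      (by rw [hdim]; nlinarith [hδ.2])
  refine ⟨_, hJ.lintegral_lt_top.ne, fun φ L hL hLip hφ x ↦ ?_⟩
  have hbound (y : Eucl n) : |φ x - φ y| ≤ min 1 (L * dist x y) :=
    le_min (abs_sub_le_of_nonneg_of_le (hφ x).1 (hφ x).2 (hφ y).1 (hφ y).2) (hLip.dist_le_mul x y)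
  calc ∫⁻ y, fracKernel n δ p φ x y
      ≤ ∫⁻ y, ENNReal.ofReal (min 1 (L * dist x y) ^ p / dist x y ^ ((n : ℝ) + δ * p)) := by
        refine lintegral_mono fun y ↦ ENNReal.ofReal_le_ofReal ?_
        gcongr
        exact hbound y
    _ = _ := by
        rw [lintegral_min_one_mul_dist_rpow_div_rpow x (NNReal.coe_pos.2 hL), hdim,
          add_sub_cancel_left]

theorem fracKernel_mul_le (hp : 1 ≤ p) {φ : Eucl n → ℝ} (hφ : ∀ x, φ x ∈ Icc (0 : ℝ) 1)
    (u : Eucl n → ℝ) (x y : Eucl n) :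
    fracKernel n δ p (fun z ↦ u z * φ z) x y ≤
      2 ^ (p - 1) * (fracKernel n δ p u x y + ‖u x‖ₑ ^ p * fracKernel n δ p φ x y) := by
  have hp₀ : 0 ≤ p := by linarith
  have hφy : ‖φ y‖ₑ ≤ 1 := by
    rw [Real.enorm_of_nonneg (hφ y).1]
    exact ENNReal.ofReal_le_one.2 (hφ y).2
  have hdiff : ‖u x * φ x - u y * φ y‖ₑ ≤ ‖u x - u y‖ₑ + ‖u x‖ₑ * ‖φ x - φ y‖ₑ :=
    calc ‖u x * φ x - u y * φ y‖ₑ = ‖(u x - u y) * φ y + u x * (φ x - φ y)‖ₑ := by ring_nf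
      _ ≤ ‖u x - u y‖ₑ * ‖φ y‖ₑ + ‖u x‖ₑ * ‖φ x - φ y‖ₑ := by
          simpa only [enorm_mul] using enorm_add_le ((u x - u y) * φ y) (u x * (φ x - φ y))
      _ ≤ ‖u x - u y‖ₑ + ‖u x‖ₑ * ‖φ x - φ y‖ₑ := by
          gcongr
          exact mul_le_of_le_one_right' hφy
  simp only [fracKernel_eq_mul_fracWeight hp₀]
  calc ‖u x * φ x - u y * φ y‖ₑ ^ p * fracWeight n δ p x y
      ≤ (‖u x - u y‖ₑ + ‖u x‖ₑ * ‖φ x - φ y‖ₑ) ^ p * fracWeight n δ p x y := by gcongr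
    _ ≤ 2 ^ (p - 1) * (‖u x - u y‖ₑ ^ p + (‖u x‖ₑ * ‖φ x - φ y‖ₑ) ^ p) *
          fracWeight n δ p x y := by
        gcongr
        exact ENNReal.rpow_add_le_mul_rpow_add_rpow _ _ hp
    _ = _ := by
        rw [ENNReal.mul_rpow_of_nonneg _ _ hp₀]
        ring

theorem setLIntegral_fracKernel_mul_le (hp : 1 ≤ p) {u φ : Eucl n → ℝ} (hu : Measurable u)
    (hφ : ∀ x, φ x ∈ Icc (0 : ℝ) 1) {x : Eucl n} {a : ℝ≥0∞}
    (ha : ∫⁻ y, fracKernel n δ p φ x y ≤ a) :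
    ∫⁻ y in D, fracKernel n δ p (fun z ↦ u z * φ z) x y ≤
      2 ^ (p - 1) * ((∫⁻ y in D, fracKernel n δ p u x y) + a * ‖u x‖ₑ ^ p) :=
  calc ∫⁻ y in D, fracKernel n δ p (fun z ↦ u z * φ z) x y
      ≤ ∫⁻ y in D, 2 ^ (p - 1) *
          (fracKernel n δ p u x y + ‖u x‖ₑ ^ p * fracKernel n δ p φ x y) :=
        lintegral_mono fun y ↦ fracKernel_mul_le hp hφ u x y
    _ = 2 ^ (p - 1) * ((∫⁻ y in D, fracKernel n δ p u x y) +
          ‖u x‖ₑ ^ p * ∫⁻ y in D, fracKernel n δ p φ x y) := by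
        rw [lintegral_const_mul' _ _ (by finiteness),
          lintegral_add_left (measurable_fracKernel hu).of_uncurry_left,
          lintegral_const_mul' _ _ (by finiteness)]
    _ ≤ _ := by
        rw [mul_comm a]
        gcongr
        exact (setLIntegral_le_lintegral _ _).trans ha

theorem fracEnergy_mul_le (hp : 1 ≤ p) {u φ : Eucl n → ℝ} (hu : Measurable u)
    (hφm : Measurable φ) (hφ : ∀ x, φ x ∈ Icc (0 : ℝ) 1) {S : Set (Eucl n)}
    (hS : MeasurableSet S) (hSD : S ⊆ D) (hφS : ∀ x ∉ S, φ x = 0) {a : ℝ≥0∞}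
    (ha : ∀ x, ∫⁻ y, fracKernel n δ p φ x y ≤ a) :
    fracEnergy n δ p D (fun x ↦ u x * φ x) ≤ 2 ^ p *
      ((∫⁻ x in S, ∫⁻ y in D, fracKernel n δ p u x y) + a * ∫⁻ x in S, ‖u x‖ₑ ^ p) := by
  have hp₀ : p ≠ 0 := by positivity
  have hzero : ∀ x ∉ S, ∀ y ∉ S, fracKernel n δ p (fun z ↦ u z * φ z) x y = 0 := by
    intro x hx y hy
    simp [fracKernel, hφS x hx, hφS y hy, hp₀]
  have hpow : (2 : ℝ≥0∞) * 2 ^ (p - 1) = 2 ^ p := by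
    rw [ENNReal.rpow_sub _ _ two_ne_zero ENNReal.ofNat_ne_top, ENNReal.rpow_one,
      ENNReal.mul_div_cancel two_ne_zero ENNReal.ofNat_ne_top]
  calc fracEnergy n δ p D (fun x ↦ u x * φ x)
      ≤ 2 * ∫⁻ x in S, ∫⁻ y in D, fracKernel n δ p (fun z ↦ u z * φ z) x y := by
        rw [fracEnergy, ← Measure.restrict_restrict_of_subset hSD]
        exact lintegral_lintegral_le_two_mul_of_symm (measurable_fracKernel (hu.mul hφm))
          (fracKernel_comm _) hS hzero
    _ ≤ 2 * ∫⁻ x in S, 2 ^ (p - 1) *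
          ((∫⁻ y in D, fracKernel n δ p u x y) + a * ‖u x‖ₑ ^ p) := by
        gcongr with x
        exact setLIntegral_fracKernel_mul_le hp hu hφ (ha x)
    _ = _ := by
        have hmeas : Measurable fun x ↦ ‖u x‖ₑ ^ p := hu.enorm.pow_const p
        rw [lintegral_const_mul' _ _ (by finiteness), lintegral_add_right _ (hmeas.const_mul a),
          lintegral_const_mul _ hmeas, ← mul_assoc, hpow]

end Cutoff

section Localization

variable {n : ℕ} {δ p q : ℝ} {D : Set (Eucl n)} {W : Set (Set (Eucl n))}

theorem volume_dilatedCube_le {Q : Set (Eucl n)} (hQ : Bornology.IsBounded Q) (hQd : 0 < diam Q) :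
    volume (dilatedCube Q) ≤
      ENNReal.ofReal (volume.real (ball (0 : Eucl n) 1) * (2 * diam Q) ^ n) := by
  obtain ⟨z, hz⟩ : Q.Nonempty := nonempty_iff_ne_empty.2 fun h ↦ by simp [h] at hQd
  rw [← volume_ball_eq_ofReal z (by positivity)]
  exact measure_mono fun x hx ↦ mem_ball_comm.1 (subset_ball_of_mem_dilatedCube hQ hx hz)

/-- The powers of `diam Q` coming from Hölder's inequality combine to the weight of the Hardy
inequality. -/
theorem ofReal_diam_rpow_inv_rpow_mul_volume_dilatedCube_rpow_le (hp : 0 < p) (hpq : p ≤ q)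
    {Q : Set (Eucl n)} (hQ : Bornology.IsBounded Q) (hQd : 0 < diam Q) :
    ENNReal.ofReal (diam Q ^ (δ * p))⁻¹ ^ (q / p) * volume (dilatedCube Q) ^ (q / p - 1) ≤
      ENNReal.ofReal ((volume.real (ball (0 : Eucl n) 1) * 2 ^ n) ^ (q / p - 1)) *
        ENNReal.ofReal (diam Q ^ hardyExponent n δ p q)⁻¹ := by
  have hq : 0 < q := hp.trans_le hpq
  have hr : 0 ≤ q / p - 1 := sub_nonneg.2 ((one_le_div hp).2 hpq)
  have hexp : -(δ * p * (q / p)) + n * (q / p - 1) = -hardyExponent n δ p q := by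
    rw [hardyExponent]
    field_simp
    ring
  set ω := volume.real (ball (0 : Eucl n) 1)
  have hω : 0 < ω := volume_real_unitBall_pos n
  calc ENNReal.ofReal (diam Q ^ (δ * p))⁻¹ ^ (q / p) * volume (dilatedCube Q) ^ (q / p - 1)
      ≤ ENNReal.ofReal (diam Q ^ (δ * p))⁻¹ ^ (q / p) *
          ENNReal.ofReal (ω * (2 * diam Q) ^ n) ^ (q / p - 1) := by
        gcongr
        exact volume_dilatedCube_le hQ hQd
    _ = ENNReal.ofReal ((ω * 2 ^ n) ^ (q / p - 1) *
          (diam Q ^ (-(δ * p * (q / p))) * diam Q ^ (n * (q / p - 1)))) := by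
        rw [ENNReal.ofReal_rpow_of_nonneg (by positivity) (by positivity),
          ENNReal.ofReal_rpow_of_nonneg (by positivity) hr, ← ENNReal.ofReal_mul (by positivity),
          ← Real.rpow_neg hQd.le, ← Real.rpow_mul hQd.le, mul_pow, ← mul_assoc ω,
          Real.mul_rpow (by positivity) (by positivity), ← Real.rpow_natCast (diam Q),
          ← Real.rpow_mul hQd.le, neg_mul]
        ring_nf
    _ = _ := by
        rw [← Real.rpow_add hQd, hexp, Real.rpow_neg hQd.le, ENNReal.ofReal_mul (by positivity)]

namespace IsWhitneyDecomposition

variable [NeZero n]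

theorem ofReal_diam_rpow_inv_mul_setLIntegral_le (hW : IsWhitneyDecomposition n D W)
    {Q : Set (Eucl n)} (hQ : Q ∈ W) {α : ℝ} (hα : 0 ≤ α) (f : Eucl n → ℝ≥0∞) :
    ENNReal.ofReal (diam Q ^ α)⁻¹ * ∫⁻ x in dilatedCube Q, f x ≤
      ENNReal.ofReal (6 ^ α) *
        ∫⁻ x in dilatedCube Q, ENNReal.ofReal (infDist x (frontier D) ^ α)⁻¹ * f x := by
  have hd := (hW.isDyadicCube hQ).diam_pos
  rw [← lintegral_const_mul' _ _ ENNReal.ofReal_ne_top,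
    ← lintegral_const_mul' _ _ ENNReal.ofReal_ne_top]
  refine setLIntegral_mono' (isOpen_dilatedCube Q).measurableSet fun x hx ↦ ?_
  rw [← mul_assoc, ← ENNReal.ofReal_mul (by positivity)]
  have hx₀ := hW.infDist_frontier_pos (hW.dilatedCube_subset hQ hx)
  gcongr
  calc (diam Q ^ α)⁻¹ = 6 ^ α * ((6 * diam Q) ^ α)⁻¹ := by
        rw [Real.mul_rpow (by norm_num) hd.le]
        field_simp
    _ ≤ 6 ^ α * (infDist x (frontier D) ^ α)⁻¹ := by
        gcongr
        exact hW.infDist_le_six_mul_diam hQ hx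

theorem exists_rpow_setLIntegral_dilatedCube_le (hW : IsWhitneyDecomposition n D W) (hp : 0 < p)
    (hpq : p ≤ q) (h : 1 / p - 1 / q ≤ δ / n) :
    ∃ c : ℝ≥0∞, c ≠ ⊤ ∧ ∀ u : Eucl n → ℝ, Measurable u → ∀ Q ∈ W,
      (ENNReal.ofReal (diam Q ^ (δ * p))⁻¹ * ∫⁻ x in dilatedCube Q, ‖u x‖ₑ ^ p) ^ (q / p) ≤
        c * ∫⁻ x in dilatedCube Q,
          ENNReal.ofReal (infDist x (frontier D) ^ hardyExponent n δ p q)⁻¹ * ‖u x‖ₑ ^ q := by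
  have hq : 0 < q := hp.trans_le hpq
  set α := hardyExponent n δ p q
  set a := ENNReal.ofReal ((volume.real (ball (0 : Eucl n) 1) * 2 ^ n) ^ (q / p - 1))
  refine ⟨a * ENNReal.ofReal (6 ^ α), by finiteness, fun u hu Q hQ ↦ ?_⟩
  have hQ' := hW.isDyadicCube hQ
  calc (ENNReal.ofReal (diam Q ^ (δ * p))⁻¹ * ∫⁻ x in dilatedCube Q, ‖u x‖ₑ ^ p) ^ (q / p)
      ≤ ENNReal.ofReal (diam Q ^ (δ * p))⁻¹ ^ (q / p) *
          ((∫⁻ x in dilatedCube Q, ‖u x‖ₑ ^ q) * volume (dilatedCube Q) ^ (q / p - 1)) := by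
        rw [ENNReal.mul_rpow_of_nonneg _ _ (by positivity)]
        gcongr
        simpa only [Measure.restrict_apply_univ] using
          rpow_lintegral_enorm_rpow_le (μ := volume.restrict (dilatedCube Q)) hp hpq
            hu.aestronglyMeasurable
    _ = ENNReal.ofReal (diam Q ^ (δ * p))⁻¹ ^ (q / p) * volume (dilatedCube Q) ^ (q / p - 1) *
          ∫⁻ x in dilatedCube Q, ‖u x‖ₑ ^ q := by ring
    _ ≤ a * ENNReal.ofReal (diam Q ^ α)⁻¹ * ∫⁻ x in dilatedCube Q, ‖u x‖ₑ ^ q := by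
        gcongr ?_ * _
        exact ofReal_diam_rpow_inv_rpow_mul_volume_dilatedCube_rpow_le hp hpq hQ'.isBounded
          hQ'.diam_pos
    _ ≤ _ := by
        rw [mul_assoc, mul_assoc]
        exact mul_le_mul' le_rfl
          (hW.ofReal_diam_rpow_inv_mul_setLIntegral_le hQ (hardyExponent_nonneg hq.le h) _)

theorem exists_fracCap_inter_le (hW : IsWhitneyDecomposition n D W) (hδ : δ ∈ Ioo (0 : ℝ) 1)
    (hp : 1 ≤ p) : ∃ c : ℝ≥0∞, c ≠ ⊤ ∧ ∀ (u : Eucl n → ℝ) (K : Set (Eucl n)), MemC0 D u →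
      (∀ x ∈ K, 1 ≤ u x) → ∀ Q ∈ W, fracCap n δ p (K ∩ Q) D ≤
        2 ^ p * ((∫⁻ x in dilatedCube Q, ∫⁻ y in D, fracKernel n δ p u x y) +
          c * (ENNReal.ofReal (diam Q ^ (δ * p))⁻¹ * ∫⁻ x in dilatedCube Q, ‖u x‖ₑ ^ p)) := by
  obtain ⟨J, hJ, hLip⟩ := exists_lintegral_fracKernel_le_of_lipschitz (n := n) hδ
    (zero_lt_one.trans_le hp)
  refine ⟨ENNReal.ofReal (2 ^ (δ * p)) * J, by finiteness, fun u K hu huK Q hQ ↦ ?_⟩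
  have hd := (hW.isDyadicCube hQ).diam_pos
  set φ : Eucl n → ℝ := fun x ↦ thickenedIndicator (half_pos hd) Q x
  have hφ01 (x : Eucl n) : φ x ∈ Icc (0 : ℝ) 1 :=
    ⟨NNReal.coe_nonneg _, NNReal.coe_le_one.2 (thickenedIndicator_le_one _ Q x)⟩
  have hφLip : LipschitzWith (diam Q / 2).toNNReal⁻¹ φ :=
    lipschitzWith_thickenedIndicator (half_pos hd) Q
  have hφ₀ : ∀ x ∉ dilatedCube Q, φ x = 0 := fun x hx ↦
    NNReal.coe_eq_zero.2 (thickenedIndicator_zero _ Q hx)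
  have hL : ENNReal.ofReal (((diam Q / 2).toNNReal⁻¹ : ℝ≥0) ^ (δ * p)) =
      ENNReal.ofReal (2 ^ (δ * p)) * ENNReal.ofReal (diam Q ^ (δ * p))⁻¹ := by
    rw [← ENNReal.ofReal_mul (by positivity), NNReal.coe_inv, Real.coe_toNNReal _ (by positivity),
      inv_div, Real.div_rpow two_pos.le hd.le, div_eq_mul_inv]
  have hφ₁ : ∀ x ∈ Q, φ x = 1 := fun x hx ↦
    NNReal.coe_eq_one.2 (thickenedIndicator_one _ Q hx)
  have hone : ∀ x ∈ K ∩ Q, 1 ≤ u x * φ x := fun x hx ↦ by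
    simpa only [hφ₁ x hx.2, mul_one] using huK x hx.1
  calc fracCap n δ p (K ∩ Q) D ≤ fracEnergy n δ p D fun x ↦ u x * φ x :=
        fracCap_le_fracEnergy (hu.mul_continuous hφLip.continuous) hone
    _ ≤ _ := fracEnergy_mul_le hp hu.continuous.measurable hφLip.continuous.measurable hφ01
        (isOpen_dilatedCube Q).measurableSet (hW.dilatedCube_subset hQ) hφ₀
        (hLip φ _ (by simpa using hd) hφLip hφ01)
    _ = _ := by
        rw [hL]
        ring

theorem exists_fracCap_inter_rpow_le (hW : IsWhitneyDecomposition n D W)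
    (hδ : δ ∈ Ioo (0 : ℝ) 1) (hp : 1 ≤ p) (hpq : p ≤ q) (h : 1 / p - 1 / q ≤ δ / n) :
    ∃ c : ℝ≥0∞, c ≠ ⊤ ∧ ∀ (u : Eucl n → ℝ) (K : Set (Eucl n)), MemC0 D u → (∀ x ∈ K, 1 ≤ u x) →
      ∀ Q ∈ W, fracCap n δ p (K ∩ Q) D ^ (q / p) ≤
        c * ((∫⁻ x in dilatedCube Q, ∫⁻ y in D, fracKernel n δ p u x y) ^ (q / p) +
          ∫⁻ x in dilatedCube Q,
            ENNReal.ofReal (infDist x (frontier D) ^ hardyExponent n δ p q)⁻¹ * ‖u x‖ₑ ^ q) := by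
  have hp₀ : 0 < p := by linarith
  have hr : 1 ≤ q / p := (one_le_div hp₀).2 hpq
  have hr₀ : 0 ≤ q / p := by linarith
  obtain ⟨a, ha, hcap⟩ := hW.exists_fracCap_inter_le hδ hp
  obtain ⟨b, hb, hHolder⟩ := hW.exists_rpow_setLIntegral_dilatedCube_le hp₀ hpq h
  refine ⟨((2 : ℝ≥0∞) ^ p) ^ (q / p) * 2 ^ (q / p - 1) * max 1 (a ^ (q / p) * b), by finiteness,
    fun u K hu huK Q hQ ↦ (ENNReal.rpow_le_rpow (hcap u K hu huK Q hQ) hr₀).trans ?_⟩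
  rw [ENNReal.mul_rpow_of_nonneg _ _ hr₀, mul_assoc, mul_assoc]
  refine mul_le_mul' le_rfl ((ENNReal.rpow_add_le_mul_rpow_add_rpow _ _ hr).trans ?_)
  refine mul_le_mul' le_rfl ?_
  rw [ENNReal.mul_rpow_of_nonneg a _ hr₀, mul_add]
  refine add_le_add (le_mul_of_one_le_left' (le_max_left _ _)) ?_
  calc _ ≤ a ^ (q / p) * (b * _) :=
        mul_le_mul' le_rfl (hHolder u hu.continuous.measurable Q hQ)
    _ ≤ _ := by
        rw [← mul_assoc]
        exact mul_le_mul' (le_max_right _ _) le_rfl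

theorem exists_tsum_fracCap_inter_rpow_le (hW : IsWhitneyDecomposition n D W)
    (hδ : δ ∈ Ioo (0 : ℝ) 1) (hp : 1 ≤ p) (hpq : p ≤ q) (h : 1 / p - 1 / q ≤ δ / n) :
    ∃ c : ℝ≥0∞, c ≠ ⊤ ∧ ∀ (u : Eucl n → ℝ) (K : Set (Eucl n)), MemC0 D u → (∀ x ∈ K, 1 ≤ u x) →
      ∑' Q : W, fracCap n δ p (K ∩ (Q : Set (Eucl n))) D ^ (q / p) ≤
        c * (fracEnergy n δ p D u ^ (q / p) +
          ∫⁻ x, ‖u x‖ₑ ^ q ∂hardyMeasure D (hardyExponent n δ p q)) := by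
  have hr : 1 ≤ q / p := (one_le_div (by linarith)).2 hpq
  have hr₀ : 0 ≤ q / p := by linarith
  obtain ⟨c, hc, hcap⟩ := hW.exists_fracCap_inter_rpow_le hδ hp hpq h
  set M := ENNReal.ofReal ((48 * n) ^ n)
  refine ⟨c * max (M ^ (q / p)) M, by finiteness, fun u K hu huK ↦ ?_⟩
  have hu₁ := hu.continuous.measurable
  have hw := measurable_ofReal_infDist_rpow_inv D (hardyExponent n δ p q)
  refine (ENNReal.tsum_le_tsum fun Q : W ↦ hcap u K hu huK Q Q.2).trans ?_
  rw [ENNReal.tsum_mul_left, ENNReal.tsum_add, mul_assoc, mul_add (max _ _)]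
  refine mul_le_mul' le_rfl (add_le_add ?_ ?_)
  · calc _ ≤ (∑' Q : W, ∫⁻ x in dilatedCube (Q : Set (Eucl n)), ∫⁻ y in D,
              fracKernel n δ p u x y) ^ (q / p) := tsum_rpow_le_rpow_tsum _ hr
      _ ≤ (M * fracEnergy n δ p D u) ^ (q / p) := by
          gcongr
          exact hW.tsum_setLIntegral_dilatedCube_le
            (measurable_fracKernel hu₁).lintegral_prod_right'.aemeasurable
      _ ≤ _ := by
          rw [ENNReal.mul_rpow_of_nonneg _ _ hr₀]
          gcongr
          exact le_max_left _ _
  · rw [hardyMeasure, lintegral_withDensity_eq_lintegral_mul _ hw (hu₁.enorm.pow_const q)]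
    exact (hW.tsum_setLIntegral_dilatedCube_le (hw.mul (hu₁.enorm.pow_const q)).aemeasurable).trans
      (mul_le_mul' (le_max_right _ _) le_rfl)

theorem exists_isCapQuasiadditive (hW : IsWhitneyDecomposition n D W)
    (hδ : δ ∈ Ioo (0 : ℝ) 1) (hp : 1 ≤ p) (hpq : p ≤ q) (h : 1 / p - 1 / q ≤ δ / n) {C : ℝ}
    (hC : HasFracHardy n δ p q C D) : ∃ N : ℝ, 0 < N ∧ IsCapQuasiadditive n δ p q N D W := by
  have hp₀ : 0 < p := by linarith
  have hq₀ : 0 < q := by linarith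
  obtain ⟨c, hc, hsum⟩ := hW.exists_tsum_fracCap_inter_rpow_le hδ hp hpq h
  obtain ⟨N, hN₀, hN⟩ := exists_pos_le_ofReal (c := (c * (1 + ENNReal.ofReal C)) ^ (p / q))
    (by finiteness)
  refine ⟨N, hN₀, fun K _ _ ↦ ?_⟩
  have hN' : ENNReal.ofReal N ≠ 0 := (ENNReal.ofReal_pos.2 hN₀).ne'
  rw [← ENNReal.div_le_iff' hN' ENNReal.ofReal_ne_top, le_fracCap_iff]
  intro u hu huK
  rw [ENNReal.div_le_iff' hN' ENNReal.ofReal_ne_top]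
  calc (∑' Q : W, fracCap n δ p (K ∩ (Q : Set (Eucl n))) D ^ (q / p)) ^ (p / q)
      ≤ (c * (1 + ENNReal.ofReal C) * fracEnergy n δ p D u ^ (q / p)) ^ (p / q) := by
        gcongr
        refine (hsum u K hu huK).trans ?_
        rw [mul_assoc, add_mul, one_mul]
        exact mul_le_mul' le_rfl (add_le_add le_rfl ((hasFracHardy_iff hq₀.le).1 hC u hu))
    _ ≤ ENNReal.ofReal N * fracEnergy n δ p D u := by
        rw [ENNReal.mul_rpow_of_nonneg _ _ (by positivity), ← ENNReal.rpow_mul,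
          div_mul_div_cancel₀ hp₀.ne', div_self hq₀.ne', ENNReal.rpow_one]
        gcongr

end IsWhitneyDecomposition

end Localization

theorem statement13_general {n : ℕ} [NeZero n] {D : Set (Eucl n)} {c₀ : ℝ} (hc₀ : 0 < c₀)
    (hD : HasMeasureDensity c₀ D) {δ p q : ℝ} (hδ : δ ∈ Ioo (0 : ℝ) 1) (hp : 1 ≤ p) (hpq : p ≤ q)
    (hpn : p < n / δ) (h : 1 / p - 1 / q ≤ δ / n) {W : Set (Set (Eucl n))}
    (hW : IsWhitneyDecomposition n D W) :
    (∃ C : ℝ, 0 < C ∧ HasFracHardy n δ p q C D) ↔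
      ∃ N : ℝ, 0 < N ∧ IsCapQuasiadditive n δ p q N D W := by
  have hpn' : δ * p / n < 1 := by
    rwa [div_lt_one (Nat.cast_pos.2 (NeZero.pos n)), mul_comm, ← lt_div_iff₀ hδ.1]
  obtain ⟨κ, hκ, hiso⟩ := hD.exists_rpow_volume_le_mul_fracCap hW.isOpen.measurableSet hc₀ hδ.1.le
    (zero_le_one.trans hp) hpn'
  exact ⟨fun ⟨_, _, hC⟩ ↦ hW.exists_isCapQuasiadditive hδ hp hpq h hC,
    fun ⟨_, _, hN⟩ ↦ hW.exists_hasFracHardy hp hpq hpn' h hκ hiso hN⟩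

/-- Characterization of fractional Hardy inequalities in unbounded John
domains: let `D ⊊ ℝⁿ` be an unbounded `c`-John domain, `n ≥ 2`, `δ ∈ (0,1)`,
`1 ≤ p, q < ∞` with `p < n/δ` and `0 ≤ 1/p - 1/q ≤ δ/n`, and let `W` be a Whitney
decomposition of `D`. Then a fractional `(δ,q,p)`-Hardy inequality holds in `D` iff there
is `N > 0` with `(∑_{Q ∈ W} cap_{δ,p}(K ∩ Q, D)^{q/p})^{p/q} ≤ N cap_{δ,p}(K, D)`
for every compact `K ⊆ D`. -/
theorem statement13 (n : ℕ) (hn : 2 ≤ n) (c : ℝ) (hc : 1 ≤ c) (D : Set (Eucl n))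
    (hD : IsJohnDomain n c D) (hDu : ¬ Bornology.IsBounded D) (hDproper : D ≠ univ)
    (δ p q : ℝ) (hδ : δ ∈ Ioo (0:ℝ) 1) (hp : 1 ≤ p) (hq : 1 ≤ q)
    (hpn : p < n / δ) (h1 : 0 ≤ 1 / p - 1 / q) (h2 : 1 / p - 1 / q ≤ δ / n)
    (W : Set (Set (Eucl n))) (hW : IsWhitneyDecomposition n D W) :
    (∃ C : ℝ, 0 < C ∧ HasFracHardy n δ p q C D) ↔
      (∃ N : ℝ, 0 < N ∧ ∀ K : Set (Eucl n), IsCompact K → K ⊆ D →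
        (∑' Q : W, fracCap n δ p (K ∩ (Q : Set (Eucl n))) D ^ (q / p)) ^ (p / q)
          ≤ ENNReal.ofReal N * fracCap n δ p K D) := by
  have : NeZero n := ⟨by omega⟩
  have hpq : p ≤ q := (one_div_le_one_div (by linarith) (by linarith)).1 (sub_nonneg.1 h1)
  exact statement13_general (mul_pos (volume_real_unitBall_pos n) (by positivity))
    (hD.hasMeasureDensity hc hDu) hδ hp hpq hpn h2 hW
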